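/- arXiv:2004.06553 — 2 statements merged into one kernel-verified Lean document; each statement's English description precedes it below -/
import Mathlib

section
/- Suppose d − m ≤ α < d. Then β(α, H_m^{d−1}) = α − 1 in the following sense: (i) for every β with 0 < β < α − 1 there exists a constant C_β such that for every μ ∈ M_d and every R > 1, ∫_{B^{d−1}(0,1)} |μ̂(R(ξ, ⟨Mξ,ξ⟩))|² √(1+4|ξ|²) dξ ≤ C_β R^{−β} I_α(μ); and (ii) for every β > α − 1 and every C > 0 there exist μ ∈ M_d with 0 < I_α(μ) < ∞ and R > 1 such that ∫_{B^{d−1}(0,1)} |μ̂(R(ξ, ⟨Mξ,ξ⟩))|² √(1+4|ξ|²) dξ > C R^{−β} I_α(μ). -/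
open MeasureTheory Metric
open scoped ENNReal NNReal

noncomputable section

/-- The quadratic form `⟨Mξ, ξ⟩` on `ℝ^{d-1}`, where the diagonal matrix `M` has its first
`d-1-m` diagonal entries equal to `+1` and its last `m` diagonal entries equal to `-1`. -/
def hypQ (d m : ℕ) (ξ : EuclideanSpace ℝ (Fin (d - 1))) : ℝ :=
  ∑ i : Fin (d - 1), (if (i : ℕ) < d - 1 - m then (1 : ℝ) else -1) * ξ i ^ 2

/-- The point `(ξ, ⟨Mξ, ξ⟩) ∈ ℝ^d` on the hyperbolic paraboloid. -/
def hypLift (d m : ℕ) (ξ : EuclideanSpace ℝ (Fin (d - 1))) : EuclideanSpace ℝ (Fin d) :=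
  (EuclideanSpace.equiv (Fin d) ℝ).symm
    (fun i => if h : (i : ℕ) < d - 1 then ξ ⟨i, h⟩ else hypQ d m ξ)

/-- The Fourier transform `μ̂(ζ) = ∫ e^{-i x·ζ} dμ(x)` of a measure on `ℝ^d`. -/
def ftM {d : ℕ} (μ : Measure (EuclideanSpace ℝ (Fin d))) (ζ : EuclideanSpace ℝ (Fin d)) : ℂ :=
  ∫ x, Complex.exp (-(Complex.I * (((∑ i, x i * ζ i) : ℝ) : ℂ))) ∂μ

/-- The `α`-dimensional energy `I_α(μ) = ∬ |x-y|^{-α} dμ(x) dμ(y)`. -/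
def energy {d : ℕ} (α : ℝ) (μ : Measure (EuclideanSpace ℝ (Fin d))) : ℝ≥0∞ :=
  ∫⁻ x, ∫⁻ y, ENNReal.ofReal (dist x y) ^ (-α) ∂μ ∂μ

/-- The hyperbolic average `∫_{B^{d-1}(0,1)} |μ̂(R(ξ,⟨Mξ,ξ⟩))|² √(1+4|ξ|²) dξ`. -/
def hypAvg (d m : ℕ) (μ : Measure (EuclideanSpace ℝ (Fin d))) (R : ℝ) : ℝ :=
  ∫ ξ in ball (0 : EuclideanSpace ℝ (Fin (d - 1))) 1,
    ‖ftM μ (R • hypLift d m ξ)‖ ^ 2 * Real.sqrt (1 + 4 * ‖ξ‖ ^ 2)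

/-- The decay estimate `∫_H |μ̂(Rξ)|² dσ(ξ) ≤ C R^{-β} I_α(μ)` holds with some constant `C`
uniformly over measures in `M_d` and all `R > 1`. -/
def decayBound (d m : ℕ) (α β : ℝ) : Prop :=
  ∃ C : ℝ, 0 < C ∧ ∀ μ : Measure (EuclideanSpace ℝ (Fin d)), IsFiniteMeasure μ →
    μ ((closedBall 0 1)ᶜ) = 0 → ∀ R : ℝ, 1 < R →
    ENNReal.ofReal (hypAvg d m μ R) ≤ ENNReal.ofReal (C * R ^ (-β)) * energy α μ

/-- The decay estimate with exponent `β` fails for every constant `C > 0`: there is a measure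
in `M_d` with finite positive `α`-energy and an `R > 1` violating the estimate. -/
def decayFails (d m : ℕ) (α β : ℝ) : Prop :=
  ∀ C : ℝ, 0 < C → ∃ μ : Measure (EuclideanSpace ℝ (Fin d)), IsFiniteMeasure μ ∧
    μ ((closedBall 0 1)ᶜ) = 0 ∧ 0 < energy α μ ∧ energy α μ ≠ ⊤ ∧
    ∃ R : ℝ, 1 < R ∧ C * R ^ (-β) * (energy α μ).toReal < hypAvg d m μ R

section gauss
open Complex
open scoped RealInnerProductSpace
variable {V : Type*} [NormedAddCommGroup V] [InnerProductSpace ℝ V] [FiniteDimensional ℝ V]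
    [MeasurableSpace V] [BorelSpace V]

lemma aux_gint {b : ℝ} (hb : 0 < b) : Integrable (fun η : V => Real.exp (-b * ‖η‖ ^ 2)) := by
  have := (GaussianFourier.integrable_cexp_neg_mul_sq_norm_add (V := V) (b := b) (by simpa) 0 0).norm
  simpa [Complex.norm_exp, ← Complex.ofReal_pow] using this

lemma aux_gauss (ν : Measure V) [IsFiniteMeasure ν] {b : ℝ} (hb : 0 < b) (ζ : V) :
    ∫ η : V, (Real.exp (-b * ‖η‖ ^ 2) : ℂ) * charFun ν (ζ + η) =
      ((Real.pi / b) ^ (Module.finrank ℝ V / 2 : ℝ) : ℝ) *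
        ∫ x, cexp (⟪x, ζ⟫ * I) * (Real.exp (-‖x‖ ^ 2 / (4 * b)) : ℂ) ∂ν := by
  have h2 : Integrable (Function.uncurry fun (η : V) (x : V) => (Real.exp (-b * ‖η‖ ^ 2) : ℂ) * cexp (⟪x, ζ + η⟫ * I)) (volume.prod ν) := by
    have h3 := (aux_gint (V := V) hb).comp_fst ν
    refine Integrable.mono' h3 (Continuous.aestronglyMeasurable ?_) (Filter.Eventually.of_forall ?_)
    · unfold Function.uncurry; fun_prop
    · rintro ⟨η, x⟩
      simp [Complex.norm_exp, ← Complex.ofReal_pow]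
  simp only [charFun_apply]
  simp_rw [← integral_const_mul]
  rw [integral_integral_swap h2]
  congr 1; ext x
  have h4 := GaussianFourier.integral_cexp_neg_mul_sq_norm_add (V := V) (b := b) (by simpa) I x
  have h5 : ∀ η : V, (Real.exp (-b * ‖η‖ ^ 2) : ℂ) * cexp (⟪x, ζ + η⟫ * I) =
     cexp (⟪x, ζ⟫ * I) * cexp (-(b:ℂ) * ‖η‖ ^ 2 + I * ⟪x, η⟫) := by
    intro η
    rw [inner_add_right]; push_cast
    rw [← Complex.exp_add, ← Complex.exp_add]; congr 1; ring
  simp_rw [h5]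
  rw [integral_const_mul, h4, Complex.ofReal_cpow (by positivity)]
  push_cast
  rw [I_sq]; ring_nf

lemma aux_gauss_energy (ν : Measure V) [IsFiniteMeasure ν] {b : ℝ} (hb : 0 < b) :
    ∫⁻ η : V, ENNReal.ofReal (Real.exp (-b * ‖η‖ ^ 2)) * ‖charFun ν η‖ₑ ^ 2 =
      ENNReal.ofReal ((Real.pi / b) ^ (Module.finrank ℝ V / 2 : ℝ)) *
        ∫⁻ x, ∫⁻ y, ENNReal.ofReal (Real.exp (-‖x - y‖ ^ 2 / (4 * b))) ∂ν ∂ν := by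
  set ν' : Measure V := ν.map (fun x => (-1 : ℝ) • x) with hν'
  have : IsFiniteMeasure ν' := by rw [hν']; infer_instance
  have hc : ∀ t, charFun (ν ∗ ν') t = ((‖charFun ν t‖ ^ 2 : ℝ) : ℂ) := by
    intro t
    rw [charFun_conv, hν', charFun_map_smul, neg_smul, one_smul, charFun_neg, Complex.mul_conj,
      Complex.normSq_eq_norm_sq]
  have h := aux_gauss (ν ∗ ν') hb 0
  simp only [zero_add, hc, inner_zero_right, ofReal_zero, zero_mul, Complex.exp_zero, one_mul] at h
  simp only [← Complex.ofReal_mul] at h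
  rw [integral_complex_ofReal, integral_complex_ofReal, ← Complex.ofReal_mul, Complex.ofReal_inj] at h
  have h1 := congrArg ENNReal.ofReal h
  have hi : Integrable (fun η : V => Real.exp (-b * ‖η‖ ^ 2) * ‖charFun ν η‖ ^ 2) := by
    refine (aux_gint (V := V) hb).mul_bdd (c := ν.real Set.univ ^ 2) ?_ (Filter.Eventually.of_forall ?_)
    · exact ((measurable_charFun.norm.pow_const 2).aestronglyMeasurable)
    · intro x
      simp only [norm_pow, norm_norm]
      gcongr
      exact norm_charFun_le x
  have hi2 : Integrable (fun x : V => Real.exp (-‖x‖ ^ 2 / (4 * b))) (ν ∗ ν') := by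
    refine (integrable_const (1:ℝ)).mono' (Continuous.aestronglyMeasurable (by fun_prop)) (Filter.Eventually.of_forall ?_)
    intro x
    simp only [Real.norm_eq_abs, Real.abs_exp, Real.exp_le_one_iff]
    have : 0 ≤ ‖x‖ ^ 2 / (4 * b) := by positivity
    rw [neg_div]; linarith
  rw [ENNReal.ofReal_mul (by positivity),
    ofReal_integral_eq_lintegral_ofReal hi (Filter.Eventually.of_forall fun x => by positivity),
    ofReal_integral_eq_lintegral_ofReal hi2 (Filter.Eventually.of_forall fun x => by positivity)] at h1
  rw [Measure.lintegral_conv (by fun_prop)] at h1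
  have h6 : ∀ x : V, ∫⁻ y, ENNReal.ofReal (Real.exp (-‖x + y‖ ^ 2 / (4 * b))) ∂ν' =
      ∫⁻ y, ENNReal.ofReal (Real.exp (-‖x - y‖ ^ 2 / (4 * b))) ∂ν := by
    intro x
    rw [hν', lintegral_map (by fun_prop) (by fun_prop)]
    simp [sub_eq_add_neg]
  simp_rw [h6] at h1
  rw [← h1]
  congr 1; ext η
  rw [ENNReal.ofReal_mul (by positivity), ENNReal.ofReal_pow (norm_nonneg _), ofReal_norm]

lemma aux_avg (ν : Measure V) [IsFiniteMeasure ν] (ζ : V) :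
    ‖charFun (ν.withDensity fun x => ENNReal.ofReal (Real.exp (-‖x‖ ^ 2 / 2))) ζ‖ₑ ^ 2 ≤
      (ENNReal.ofReal ((2 * Real.pi) ^ (Module.finrank ℝ V / 2 : ℝ)))⁻¹ *
      ∫⁻ η : V, ENNReal.ofReal (Real.exp (-‖η‖ ^ 2 / 2)) * ‖charFun ν (ζ + η)‖ₑ ^ 2 := by
  have h := aux_gauss ν (b := 1/2) (by norm_num) ζ
  set c : ℝ := ((2 * Real.pi) ^ (Module.finrank ℝ V / 2 : ℝ)) with hc
  have hcpos : 0 < c := by positivity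
  have hceq : (Real.pi / (1/2)) ^ (Module.finrank ℝ V / 2 : ℝ) = c := by
    rw [hc]; congr 1; ring
  have e1 : charFun (ν.withDensity fun x => ENNReal.ofReal (Real.exp (-‖x‖ ^ 2 / 2))) ζ =
     ∫ x, cexp (⟪x, ζ⟫ * I) * (Real.exp (-‖x‖ ^ 2 / (4 * (1/2)))  : ℂ) ∂ν := by
    rw [charFun_apply, integral_withDensity_eq_integral_toReal_smul (by fun_prop) (by simp)]
    congr 1; ext x
    rw [ENNReal.toReal_ofReal (by positivity), Complex.real_smul, mul_comm]
    norm_num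
  rw [hceq, ← e1] at h
  set z := charFun (ν.withDensity fun x => ENNReal.ofReal (Real.exp (-‖x‖ ^ 2 / 2))) ζ
  have hγ : ∫⁻ η : V, ENNReal.ofReal (Real.exp (-‖η‖ ^ 2 / 2)) = ENNReal.ofReal c := by
    rw [← hceq, ← GaussianFourier.integral_rexp_neg_mul_sq_norm (by norm_num),
      ofReal_integral_eq_lintegral_ofReal (aux_gint (by norm_num)) (Filter.Eventually.of_forall fun x => by positivity)]
    congr 1; ext; congr 2; ring
  have h2 : ENNReal.ofReal c * ‖z‖ₑ ≤ ∫⁻ η : V, ENNReal.ofReal (Real.exp (-‖η‖ ^ 2 / 2)) * ‖charFun ν (ζ + η)‖ₑ := by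
    calc ENNReal.ofReal c * ‖z‖ₑ = ‖(c:ℂ) * z‖ₑ := by
          rw [enorm_mul, ← ofReal_norm (c:ℂ), Complex.norm_real, Real.norm_of_nonneg hcpos.le]
      _ ≤ _ := by
        rw [← h]
        refine (enorm_integral_le_lintegral_enorm _).trans (le_of_eq ?_)
        congr 1; ext η
        rw [enorm_mul, ← ofReal_norm (Complex.ofReal _), Complex.norm_real, Real.norm_of_nonneg (by positivity)]
        congr 3; ring
  set B := ∫⁻ η : V, ENNReal.ofReal (Real.exp (-‖η‖ ^ 2 / 2)) * ‖charFun ν (ζ + η)‖ₑ ^ 2 with hB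
  have hmeas : Measurable fun η : V => ‖charFun ν (ζ + η)‖ₑ :=
    (measurable_charFun.comp (measurable_const_add ζ)).enorm
  have h3 : ∫⁻ η : V, ENNReal.ofReal (Real.exp (-‖η‖ ^ 2 / 2)) * ‖charFun ν (ζ + η)‖ₑ ≤
      (ENNReal.ofReal c) ^ (1/2:ℝ) * B ^ (1/2:ℝ) := by
    have := ENNReal.lintegral_mul_le_Lp_mul_Lq (volume : Measure V) (p := 2) (q := 2) (Real.HolderConjugate.two_two)
      (f := fun η => ENNReal.ofReal (Real.exp (-‖η‖ ^ 2 / 4)))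
      (g := fun η => ENNReal.ofReal (Real.exp (-‖η‖ ^ 2 / 4)) * ‖charFun ν (ζ + η)‖ₑ) (by fun_prop)
      (Measurable.aemeasurable (by fun_prop))
    have hs : ∀ η : V, ENNReal.ofReal (Real.exp (-‖η‖ ^ 2 / 4)) * ENNReal.ofReal (Real.exp (-‖η‖ ^ 2 / 4)) =
        ENNReal.ofReal (Real.exp (-‖η‖ ^ 2 / 2)) := by
      intro η
      rw [← ENNReal.ofReal_mul (by positivity), ← Real.exp_add]; congr 2; ring
    simp only [Pi.mul_apply, ← mul_assoc, hs, ENNReal.rpow_two, mul_pow] at this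
    simp only [sq (ENNReal.ofReal (Real.exp _)), hs, hγ] at this
    exact this
  have h4 : (ENNReal.ofReal c * ‖z‖ₑ) ^ 2 ≤ ENNReal.ofReal c * B := by
    calc _ ≤ ((ENNReal.ofReal c) ^ (1/2:ℝ) * B ^ (1/2:ℝ)) ^ 2 := pow_le_pow_left' (h2.trans h3) 2
      _ = _ := by
        rw [← ENNReal.mul_rpow_of_nonneg _ _ (by norm_num), ← ENNReal.rpow_natCast, ← ENNReal.rpow_mul]
        norm_num
  have hc0 : ENNReal.ofReal c ≠ 0 := by simpa using hcpos
  rw [mul_pow, sq (ENNReal.ofReal c), mul_assoc] at h4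
  have h5 := (ENNReal.mul_le_mul_iff_right hc0 ENNReal.ofReal_ne_top).1 h4
  rw [mul_comm, ← ENNReal.le_div_iff_mul_le (Or.inl hc0) (Or.inl ENNReal.ofReal_ne_top)] at h5
  rwa [mul_comm, ← div_eq_mul_inv]
end gauss

lemma ft_enorm {d : ℕ} (μ : Measure (EuclideanSpace ℝ (Fin d))) (ζ : EuclideanSpace ℝ (Fin d)) :
    ‖ftM μ ζ‖ₑ = ‖charFun μ ζ‖ₑ := by
  have : ftM μ ζ = charFun μ (-ζ) := by
    rw [ftM, charFun_apply]
    congr 1; ext x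
    rw [inner_neg_right]
    congr 1
    simp only [PiLp.inner_apply, RCLike.inner_apply, conj_trivial]
    push_cast
    rw [neg_mul, mul_comm]
    simp [mul_comm]
  rw [this, charFun_neg, ← ofReal_norm, ← ofReal_norm, RCLike.norm_conj]

lemma hypQ_abs (d m : ℕ) (ξ : EuclideanSpace ℝ (Fin (d - 1))) : |hypQ d m ξ| ≤ ‖ξ‖ ^ 2 := by
  rw [hypQ, EuclideanSpace.real_norm_sq_eq]
  refine (Finset.abs_sum_le_sum_abs _ _).trans (Finset.sum_le_sum fun i _ => ?_)
  rw [abs_mul, abs_of_nonneg (sq_nonneg (ξ i))]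
  split_ifs <;> simp

lemma hypLift_sub (n m : ℕ) (R : ℝ) (η : EuclideanSpace ℝ (Fin (n + 1))) (ξ : EuclideanSpace ℝ (Fin n)) :
    ‖η - R • hypLift (n + 1) m ξ‖ ^ 2 =
      ‖(WithLp.toLp 2 fun i : Fin n => η i.castSucc) - R • ξ‖ ^ 2 + (η (Fin.last n) - R * hypQ (n + 1) m ξ) ^ 2 := by
  rw [EuclideanSpace.real_norm_sq_eq, EuclideanSpace.real_norm_sq_eq, Fin.sum_univ_castSucc]
  congr 1
  · refine Finset.sum_congr rfl fun i _ => ?_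
    simp [hypLift]
  · simp [hypLift]

lemma hypLift_cont (d m : ℕ) : Continuous (hypLift d m) := by
  unfold hypLift
  refine (EuclideanSpace.equiv (Fin d) ℝ).symm.continuous.comp ?_
  refine continuous_pi fun i => ?_
  split_ifs with h
  · fun_prop
  · unfold hypQ; fun_prop

lemma aux_K (n m : ℕ) (η : EuclideanSpace ℝ (Fin (n + 1))) {R : ℝ} (hR : 1 < R) :
    ∫⁻ ξ in ball (0 : EuclideanSpace ℝ (Fin n)) 1,
      ENNReal.ofReal (Real.exp (-‖η - R • hypLift (n + 1) m ξ‖ ^ 2 / 2)) ≤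
    ENNReal.ofReal (Real.exp (1 / 2) * (Real.pi / (R ^ 2 / 4)) ^ ((n : ℝ) / 2)) *
      ENNReal.ofReal (Real.exp (-(1 / (8 * R ^ 2)) * ‖η‖ ^ 2)) := by
  set η' : EuclideanSpace ℝ (Fin n) := WithLp.toLp 2 fun i : Fin n => η i.castSucc with hη'
  have hR0 : 0 < R := by linarith
  have key : ∀ ξ ∈ ball (0 : EuclideanSpace ℝ (Fin n)) 1,
      ENNReal.ofReal (Real.exp (-‖η - R • hypLift (n + 1) m ξ‖ ^ 2 / 2)) ≤
      ENNReal.ofReal (Real.exp (1 / 2)  * Real.exp (-(1 / (8 * R ^ 2)) * ‖η‖ ^ 2)) *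
      ENNReal.ofReal (Real.exp (-(R ^ 2 / 4) * ‖ξ - R⁻¹ • η'‖ ^ 2)) := by
    intro ξ hξ
    have hξ1 : ‖ξ‖ < 1 := by simpa using hξ
    rw [← ENNReal.ofReal_mul (by positivity), ← Real.exp_add, ← Real.exp_add]
    apply ENNReal.ofReal_le_ofReal
    apply Real.exp_le_exp.2
    have e1 : R ^ 2 * ‖ξ - R⁻¹ • η'‖ ^ 2 = ‖η' - R • ξ‖ ^ 2 := by
      rw [← mul_pow, ← abs_of_pos hR0, ← Real.norm_eq_abs, ← norm_smul, smul_sub, smul_smul,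
        Real.norm_eq_abs, abs_of_pos hR0,
        mul_inv_cancel₀ hR0.ne', one_smul, norm_sub_rev]
    have e2 := hypLift_sub n m R η ξ
    rw [← hη'] at e2
    have e3 : ‖hypLift (n + 1) m ξ‖ ^ 2 ≤ 2 := by
      have h0 := hypLift_sub n m 1 0 ξ
      have h1 := hypQ_abs (n + 1) m ξ
      have h2 : ‖ξ‖ ^ 2 ≤ 1 := by nlinarith [norm_nonneg ξ]
      have h3 : (WithLp.toLp 2 fun i : Fin n => (0 : EuclideanSpace ℝ (Fin (n+1))) i.castSucc) = (0 : EuclideanSpace ℝ (Fin n)) := by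
        ext i; simp
      rw [h3] at h0
      simp only [one_smul, zero_sub, norm_neg] at h0
      rw [h0]
      have h4 : |hypQ (n + 1) m ξ| ≤ 1 := h1.trans h2
      have := sq_le_one_iff_abs_le_one (hypQ (n+1) m ξ) |>.2 h4
      simp only [PiLp.zero_apply, one_mul, zero_sub, neg_sq]
      linarith
    set D := ‖η - R • hypLift (n + 1) m ξ‖ ^ 2 with hD
    have e4 : ‖η‖ ^ 2 ≤ 2 * D + 4 * R ^ 2 := by
      have t : ‖η‖ ≤ ‖η - R • hypLift (n + 1) m ξ‖ + R * ‖hypLift (n + 1) m ξ‖ := by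
        calc ‖η‖ = ‖(η - R • hypLift (n + 1) m ξ) + R • hypLift (n + 1) m ξ‖ := by rw [sub_add_cancel]
          _ ≤ _ := by
            refine (norm_add_le _ _).trans (le_of_eq ?_)
            rw [norm_smul R, Real.norm_of_nonneg hR0.le]
      have t2 : ‖η‖ ^ 2 ≤ (‖η - R • hypLift (n + 1) m ξ‖ + R * ‖hypLift (n + 1) m ξ‖) ^ 2 := by gcongr
      have t3 : (‖η - R • hypLift (n + 1) m ξ‖ + R * ‖hypLift (n + 1) m ξ‖) ^ 2 ≤
        2 * ‖η - R • hypLift (n + 1) m ξ‖ ^ 2 + 2 * (R * ‖hypLift (n + 1) m ξ‖) ^ 2 := by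
        nlinarith [sq_nonneg (‖η - R • hypLift (n + 1) m ξ‖ - R * ‖hypLift (n + 1) m ξ‖)]
      have t4 : (R * ‖hypLift (n + 1) m ξ‖) ^ 2 ≤ R ^ 2 * 2 := by rw [mul_pow]; gcongr
      linarith
    have e5 : 1 / (8 * R ^ 2) * ‖η‖ ^ 2 ≤ D / 4 + 1 / 2 := by
      rw [one_div, ← div_eq_inv_mul, div_le_iff₀ (by positivity)]
      have : D ≤ D * R ^ 2 := le_mul_of_one_le_right (by positivity) (by nlinarith)
      nlinarith
    have e6 : ‖η' - R • ξ‖ ^ 2 ≤ D := by rw [e2]; nlinarith [sq_nonneg (η (Fin.last n) - R * hypQ (n + 1) m ξ)]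
    nlinarith
  have hm : Measurable fun ξ : EuclideanSpace ℝ (Fin n) => ENNReal.ofReal (Real.exp (-(R ^ 2 / 4) * ‖ξ - R⁻¹ • η'‖ ^ 2)) := by
    fun_prop
  calc _ ≤ ∫⁻ ξ in ball (0 : EuclideanSpace ℝ (Fin n)) 1, ENNReal.ofReal (Real.exp (1 / 2)  * Real.exp (-(1 / (8 * R ^ 2)) * ‖η‖ ^ 2)) *
      ENNReal.ofReal (Real.exp (-(R ^ 2 / 4) * ‖ξ - R⁻¹ • η'‖ ^ 2)) :=
        setLIntegral_mono (hm.const_mul _) key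
    _ ≤ ∫⁻ ξ, ENNReal.ofReal (Real.exp (1 / 2)  * Real.exp (-(1 / (8 * R ^ 2)) * ‖η‖ ^ 2)) *
      ENNReal.ofReal (Real.exp (-(R ^ 2 / 4) * ‖ξ - R⁻¹ • η'‖ ^ 2)) := setLIntegral_le_lintegral _ _
    _ = _ := by
      rw [lintegral_const_mul _ hm, lintegral_sub_right_eq_self
        (fun ξ => ENNReal.ofReal (Real.exp (-(R ^ 2 / 4) * ‖ξ‖ ^ 2))) (R⁻¹ • η'),
        ← ofReal_integral_eq_lintegral_ofReal (aux_gint (by positivity)) (Filter.Eventually.of_forall fun x => by positivity),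
        GaussianFourier.integral_rexp_neg_mul_sq_norm (by positivity), ← ENNReal.ofReal_mul (by positivity),
        ← ENNReal.ofReal_mul (by positivity)]
      congr 1
      simp only [finrank_euclideanSpace, Fintype.card_fin]
      ring

lemma aux_exp {α : ℝ} (hα : 0 < α) {R : ℝ} (hR : 0 < R) {t : ℝ} (ht : 0 ≤ t) :
    ENNReal.ofReal (Real.exp (-t ^ 2 / (4 * (1 / (8 * R ^ 2))))) ≤
      ENNReal.ofReal ((α / 2) ^ (α / 2) * R ^ (-α)) * ENNReal.ofReal t ^ (-α) := by
  rcases ht.eq_or_lt with rfl | ht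
  · rw [ENNReal.ofReal_zero, ENNReal.zero_rpow_of_neg (by linarith), ENNReal.mul_top]
    · exact le_top
    · simp only [ne_eq, ENNReal.ofReal_eq_zero, not_le]; positivity
  · rw [ENNReal.ofReal_rpow_of_pos ht, ← ENNReal.ofReal_mul (by positivity)]
    apply ENNReal.ofReal_le_ofReal
    have e : -t ^ 2 / (4 * (1 / (8 * R ^ 2))) = -(2 * (R * t) ^ 2) := by
      field_simp; ring
    rw [e, mul_assoc, ← Real.mul_rpow hR.le ht.le, Real.exp_neg, Real.rpow_neg (by positivity),
      ← div_eq_mul_inv, inv_le_comm₀ (by positivity) (by positivity), inv_div, div_le_iff₀ (by positivity)]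
    set s := R * t with hs
    have hs0 : 0 < s := by positivity
    have h1 : s ^ 2 ≤ (α / 2) * Real.exp (s ^ 2 / (α / 2)) := by
      have := Real.add_one_le_exp (s ^ 2 / (α / 2))
      have h2 : s ^ 2 = (α / 2) * (s ^ 2 / (α / 2)) := by field_simp
      calc s ^ 2 = (α / 2) * (s ^ 2 / (α / 2)) := h2
        _ ≤ _ := by gcongr; linarith
    calc s ^ α = (s ^ 2) ^ (α / 2) := by
          rw [← Real.rpow_natCast, ← Real.rpow_mul hs0.le]; congr 1; push_cast; ring
      _ ≤ ((α / 2) * Real.exp (s ^ 2 / (α / 2))) ^ (α / 2) := by gcongr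
      _ = (α / 2) ^ (α / 2) * Real.exp (s ^ 2) := by
          rw [Real.mul_rpow (by positivity) (by positivity), ← Real.exp_mul]
          congr 2; field_simp
      _ ≤ Real.exp (2 * s ^ 2) * (α / 2) ^ (α / 2) := by
          rw [mul_comm]; gcongr; nlinarith [sq_nonneg s]

lemma aux_upper (n m : ℕ) {α : ℝ} (hα : 0 < α) : ∃ C : ℝ, 0 < C ∧
    ∀ ν : Measure (EuclideanSpace ℝ (Fin (n + 1))), IsFiniteMeasure ν → ∀ R : ℝ, 1 < R →
    ∫⁻ ξ in ball (0 : EuclideanSpace ℝ (Fin n)) 1,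
      ‖charFun (ν.withDensity fun x => ENNReal.ofReal (Real.exp (-‖x‖ ^ 2 / 2))) (R • hypLift (n + 1) m ξ)‖ₑ ^ 2
     ≤ ENNReal.ofReal (C * R ^ (1 - α)) * energy α ν := by
  refine ⟨((2 * Real.pi) ^ (((n + 1 : ℕ) : ℝ) / 2))⁻¹ * (Real.exp (1 / 2) * (4 * Real.pi) ^ ((n : ℝ) / 2)) *
    ((8 * Real.pi) ^ (((n + 1 : ℕ) : ℝ) / 2)) * ((α / 2) ^ (α / 2)), by positivity, ?_⟩
  intro ν _ R hR
  have hR0 : 0 < R := by linarith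
  set F : EuclideanSpace ℝ (Fin (n + 1)) → ℝ≥0∞ := fun η => ‖charFun ν η‖ₑ ^ 2 with hF
  have hFm : Measurable F := (measurable_charFun.enorm).pow_const 2
  have hL : Measurable fun ξ : EuclideanSpace ℝ (Fin n) => R • hypLift (n + 1) m ξ :=
    ((hypLift_cont (n + 1) m).measurable).const_smul R
  set c1 := (ENNReal.ofReal ((2 * Real.pi) ^ (((n + 1 : ℕ) : ℝ) / 2)))⁻¹ with hc1
  set c2 := ENNReal.ofReal (Real.exp (1 / 2) * (Real.pi / (R ^ 2 / 4)) ^ ((n : ℝ) / 2)) with hc2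
  set c3 := ENNReal.ofReal ((Real.pi / (1 / (8 * R ^ 2))) ^ (((n + 1 : ℕ) : ℝ) / 2)) with hc3
  set c4 := ENNReal.ofReal ((α / 2) ^ (α / 2) * R ^ (-α)) with hc4
  have hM : Measurable fun p : EuclideanSpace ℝ (Fin n) × EuclideanSpace ℝ (Fin (n + 1)) =>
      ENNReal.ofReal (Real.exp (-‖p.2 - R • hypLift (n + 1) m p.1‖ ^ 2 / 2)) * F p.2 := by
    have : Measurable fun p : EuclideanSpace ℝ (Fin n) × EuclideanSpace ℝ (Fin (n + 1)) =>
      R • hypLift (n + 1) m p.1 := hL.comp measurable_fst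
    have h2 : Measurable fun p : EuclideanSpace ℝ (Fin n) × EuclideanSpace ℝ (Fin (n + 1)) => F p.2 := hFm.comp measurable_snd
    fun_prop
  calc _ ≤ ∫⁻ ξ in ball (0 : EuclideanSpace ℝ (Fin n)) 1, c1 * ∫⁻ η, 
          ENNReal.ofReal (Real.exp (-‖η - R • hypLift (n + 1) m ξ‖ ^ 2 / 2)) * F η := by
        refine lintegral_mono fun ξ => ?_
        refine (aux_avg ν _).trans (le_of_eq ?_)
        rw [finrank_euclideanSpace, Fintype.card_fin]
        congr 1
        rw [← lintegral_add_left_eq_self (fun η => ENNReal.ofReal (Real.exp (-‖η - R • hypLift (n + 1) m ξ‖ ^ 2 / 2)) * F η)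
          (R • hypLift (n + 1) m ξ)]
        simp [hF]
    _ = c1 * ∫⁻ η, (∫⁻ ξ in ball (0 : EuclideanSpace ℝ (Fin n)) 1,  
          ENNReal.ofReal (Real.exp (-‖η - R • hypLift (n + 1) m ξ‖ ^ 2 / 2))) * F η := by
        rw [lintegral_const_mul _ hM.lintegral_prod_right', lintegral_lintegral_swap hM.aemeasurable]
        congr 2; ext η
        dsimp only
        rw [lintegral_mul_const _ (by fun_prop)]
    _ ≤ c1 * ∫⁻ η, c2 * (ENNReal.ofReal (Real.exp (-(1 / (8 * R ^ 2)) * ‖η‖ ^ 2)) * F η) := by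
        gcongr c1 * ?_
        refine lintegral_mono fun η => ?_
        rw [← mul_assoc]
        refine mul_le_mul_left ?_ _
        exact aux_K n m η hR
    _ = c1 * (c2 * (c3 * ∫⁻ x, ∫⁻ y, ENNReal.ofReal (Real.exp (-‖x - y‖ ^ 2 / (4 * (1 / (8 * R ^ 2))))) ∂ν ∂ν)) := by
        rw [lintegral_const_mul _ (by fun_prop), aux_gauss_energy ν (by positivity),
          finrank_euclideanSpace, Fintype.card_fin]
    _ ≤ c1 * (c2 * (c3 * (c4 * energy α ν))) := by
        gcongr
        rw [energy, ← lintegral_const_mul' _ _ (by simp [hc4])]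
        refine lintegral_mono fun x => ?_
        rw [← lintegral_const_mul' _ _ (by simp [hc4])]
        refine lintegral_mono fun y => ?_
        rw [dist_eq_norm]
        exact aux_exp hα hR0 (norm_nonneg _)
    _ = _ := by
        simp only [← mul_assoc]
        congr 1
        rw [hc1, hc2, hc3, hc4, ← ENNReal.ofReal_inv_of_pos (by positivity),
          ← ENNReal.ofReal_mul (by positivity), ← ENNReal.ofReal_mul (by positivity), ← ENNReal.ofReal_mul (by positivity)]
        congr 1
        have r1 : (Real.pi / (R ^ 2 / 4)) ^ ((n : ℝ) / 2) = (4 * Real.pi) ^ ((n : ℝ) / 2) * R ^ (-(n:ℝ)) := by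
          have : Real.pi / (R ^ 2 / 4) = (4 * Real.pi) * (R ^ (-2 : ℝ)) := by
            rw [Real.rpow_neg hR0.le]; norm_num; field_simp
          rw [this, Real.mul_rpow (by positivity) (by positivity), ← Real.rpow_mul hR0.le]
          congr 2; ring
        have r2 : (Real.pi / (1 / (8 * R ^ 2))) ^ (((n + 1 : ℕ) : ℝ) / 2) = (8 * Real.pi) ^ (((n + 1 : ℕ) : ℝ) / 2) * R ^ (((n + 1 : ℕ) : ℝ)) := by
          have : Real.pi / (1 / (8 * R ^ 2)) = (8 * Real.pi) * (R ^ (2 : ℝ)) := by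
            norm_num; field_simp
          rw [this, Real.mul_rpow (by positivity) (by positivity), ← Real.rpow_mul hR0.le]
          congr 2; ring
        have r3 : R ^ (1 - α) = R ^ (-(n:ℝ)) * R ^ (((n + 1 : ℕ) : ℝ)) * R ^ (-α) := by
          rw [← Real.rpow_add hR0, ← Real.rpow_add hR0]; congr 1; push_cast; ring
        rw [r1, r2, r3]; ring

lemma avg_meas (d m : ℕ) (μ : Measure (EuclideanSpace ℝ (Fin d))) [IsFiniteMeasure μ] (R : ℝ) :
    Measurable fun ξ => ‖ftM μ (R • hypLift d m ξ)‖ ^ 2 * Real.sqrt (1 + 4 * ‖ξ‖ ^ 2) := by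
  have : ∀ ζ, ‖ftM μ ζ‖ = ‖charFun μ ζ‖ := fun ζ => by
    have := ft_enorm μ ζ
    rw [← ofReal_norm, ← ofReal_norm, ENNReal.ofReal_eq_ofReal_iff (norm_nonneg _) (norm_nonneg _)] at this
    exact this
  simp_rw [this]
  have h1 : Measurable fun ξ => charFun μ (R • hypLift d m ξ) :=
    measurable_charFun.comp (((hypLift_cont d m).measurable).const_smul R)
  fun_prop

lemma energy_mono_smul {d : ℕ} {α : ℝ} {μ ν : Measure (EuclideanSpace ℝ (Fin d))} [SFinite μ] {c : ℝ≥0∞} (h : ν ≤ c • μ) :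
    energy α ν ≤ c * c * energy α μ := by
  rw [energy, energy]
  have hm : Measurable fun p : EuclideanSpace ℝ (Fin d) × EuclideanSpace ℝ (Fin d) =>
    ENNReal.ofReal (dist p.1 p.2) ^ (-α) := by fun_prop
  have : ∀ x, ∫⁻ y, ENNReal.ofReal (dist x y) ^ (-α) ∂ν ≤ c * ∫⁻ y, ENNReal.ofReal (dist x y) ^ (-α) ∂μ := by
    intro x
    refine (lintegral_mono' h le_rfl).trans ?_
    rw [lintegral_smul_measure]; rfl
  refine (lintegral_mono' h this).trans ?_
  rw [lintegral_smul_measure, lintegral_const_mul _ hm.lintegral_prod_right', smul_eq_mul, mul_assoc]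

lemma part_one (n m : ℕ) {α β : ℝ} (hα : 0 < α) (hβ : β < α - 1) : decayBound (n + 1) m α β := by
  obtain ⟨C, hC, h⟩ := aux_upper n m hα
  set e := Real.exp (1 / 2) with he
  refine ⟨Real.sqrt 5 * (C * (e * e)), by positivity, ?_⟩
  intro μ _ hμ R hR
  have hR0 : 0 < R := by linarith
  set g : EuclideanSpace ℝ (Fin (n + 1)) → ℝ≥0∞ := fun x => ENNReal.ofReal (Real.exp (‖x‖ ^ 2 / 2)) with hg
  have hgm : Measurable g := by fun_prop
  set ν := μ.withDensity g with hν
  have hsupp : ∀ᵐ x ∂μ, x ∈ closedBall (0 : EuclideanSpace ℝ (Fin (n + 1))) 1 := by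
    rw [ae_iff]; exact hμ
  have hle : ν ≤ ENNReal.ofReal e • μ := by
    rw [← withDensity_const]
    refine withDensity_mono ?_
    filter_upwards [hsupp] with x hx
    have : ‖x‖ ≤ 1 := by simpa using hx
    refine ENNReal.ofReal_le_ofReal (Real.exp_le_exp.2 ?_)
    nlinarith [norm_nonneg x]
  have hfin : IsFiniteMeasure ν := ⟨by
    refine (hle Set.univ).trans_lt ?_
    simp only [Measure.smul_apply, smul_eq_mul]
    exact ENNReal.mul_lt_top ENNReal.ofReal_lt_top (measure_lt_top _ _)⟩
  have hμν : (ν.withDensity fun x => ENNReal.ofReal (Real.exp (-‖x‖ ^ 2 / 2))) = μ := by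
    have := withDensity_inv_same (μ := μ) hgm (Filter.Eventually.of_forall fun x => by simp [hg, Real.exp_pos])
      (Filter.Eventually.of_forall fun x => by simp [hg])
    rw [← hν] at this
    convert this using 2
    ext x
    rw [hg, ← ENNReal.ofReal_inv_of_pos (by positivity), ← Real.exp_neg, neg_div]
  have h1 := h ν hfin R hR
  rw [hμν] at h1
  have h2 : ENNReal.ofReal (hypAvg (n + 1) m μ R) ≤ ENNReal.ofReal (Real.sqrt 5) * 
      ∫⁻ ξ in ball (0 : EuclideanSpace ℝ (Fin n)) 1, ‖charFun μ (R • hypLift (n + 1) m ξ)‖ₑ ^ 2 := by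
    rw [hypAvg, integral_eq_lintegral_of_nonneg_ae (Filter.Eventually.of_forall fun x => by positivity)
      (avg_meas (n + 1) m μ R).aestronglyMeasurable]
    refine ENNReal.ofReal_toReal_le.trans ?_
    rw [← lintegral_const_mul' _ _ ENNReal.ofReal_ne_top]
    refine setLIntegral_mono' measurableSet_ball fun ξ hξ => ?_
    have hξ1 : ‖ξ‖ < 1 := by simpa using hξ
    rw [ENNReal.ofReal_mul (by positivity), mul_comm, ENNReal.ofReal_pow (norm_nonneg _), ofReal_norm, ft_enorm]
    gcongr
    nlinarith [norm_nonneg ξ]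
  have h3 := energy_mono_smul (α := α) hle
  calc _ ≤ ENNReal.ofReal (Real.sqrt 5) * (ENNReal.ofReal (C * R ^ (1 - α)) * (ENNReal.ofReal e * ENNReal.ofReal e * energy α μ)) := by
        refine h2.trans ?_
        gcongr
        refine h1.trans ?_
        gcongr
    _ = ENNReal.ofReal (Real.sqrt 5 * (C * (e * e)) * R ^ (1 - α)) * energy α μ := by
        simp only [← mul_assoc]
        rw [← ENNReal.ofReal_mul (by positivity), ← ENNReal.ofReal_mul (by positivity), ← ENNReal.ofReal_mul (by positivity)]
        congr 2; ring
    _ ≤ _ := by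
        gcongr
        · exact hR.le
        · linarith

section blocks

def ja (m l : ℕ) (q : Fin m) : Fin (m + l + m) := Fin.castAdd m (Fin.castAdd l q)
def jb (m l : ℕ) (p : Fin l) : Fin (m + l + m) := Fin.castAdd m (Fin.natAdd m p)
def jc (m l : ℕ) (q : Fin m) : Fin (m + l + m) := Fin.natAdd (m + l) q
def mk3 {m l : ℕ} (f : Fin m → ℝ) (g : Fin l → ℝ) (h : Fin m → ℝ) : Fin (m + l + m) → ℝ :=
  Fin.append (Fin.append f g) h
def mk4 {m l : ℕ} (f : Fin m → ℝ) (g : Fin l → ℝ) (h : Fin m → ℝ) (e : ℝ) : Fin (m + l + m + 1) → ℝ :=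
  Fin.snoc (α := fun _ => ℝ) (mk3 f g h) e

variable {m l : ℕ} (f : Fin m → ℝ) (g : Fin l → ℝ) (h : Fin m → ℝ) (e : ℝ)
@[simp] lemma mk3_a (q : Fin m) : mk3 f g h (ja m l q) = f q := by simp [mk3, ja]
@[simp] lemma mk3_b (q : Fin l) : mk3 f g h (jb m l q) = g q := by simp [mk3, jb]
@[simp] lemma mk3_c (q : Fin m) : mk3 f g h (jc m l q) = h q := by simp [mk3, jc]
@[simp] lemma mk4_s (q) : mk4 f g h e (Fin.castSucc q) = mk3 f g h q := by simp [mk4]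
@[simp] lemma mk4_l : mk4 f g h e (Fin.last _) = e := by simp [mk4]

@[elab_as_elim]
lemma forall3 {P : Fin (m + l + m) → Prop} (ha : ∀ q, P (ja m l q)) (hb : ∀ q, P (jb m l q))
    (hc : ∀ q, P (jc m l q)) (i) : P i := by
  refine Fin.addCases (fun i => ?_) hc i
  exact Fin.addCases ha hb i

lemma sum3 (F : Fin (m + l + m) → ℝ) :
    ∑ i, F i = ∑ q, F (ja m l q) + ∑ q, F (jb m l q) + ∑ q, F (jc m l q) := by
  rw [Fin.sum_univ_add, Fin.sum_univ_add]; rfl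
lemma prod3 (F : Fin (m + l + m) → ℝ) :
    ∏ i, F i = (∏ q, F (ja m l q)) * (∏ q, F (jb m l q)) * ∏ q, F (jc m l q) := by
  rw [Fin.prod_univ_add, Fin.prod_univ_add]; rfl

lemma hypQ_blk (ξ : Fin (m + l + m) → ℝ) :
    hypQ (m + l + m + 1) m (WithLp.toLp 2 ξ) =
      ∑ q, ξ (ja m l q) ^ 2 + ∑ q, ξ (jb m l q) ^ 2 - ∑ q, ξ (jc m l q) ^ 2 := by
  change ∑ i : Fin (m + l + m), (if (i : ℕ) < m + l + m + 1 - 1 - m then (1 : ℝ) else -1) * ξ i ^ 2 = _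
  rw [sum3, sub_eq_add_neg, ← Finset.sum_neg_distrib]
  congr 1
  · congr 1
    · refine Finset.sum_congr rfl fun q _ => ?_
      rw [if_pos (by simp [ja]; omega), one_mul]
    · refine Finset.sum_congr rfl fun q _ => ?_
      rw [if_pos (by simp [jb]), one_mul]
  · refine Finset.sum_congr rfl fun q _ => ?_
    rw [if_neg (by simp [jc]), neg_one_mul]

lemma hypLift_s (ξ : Fin (m + l + m) → ℝ) (i : Fin (m + l + m)) :
    hypLift (m + l + m + 1) m (WithLp.toLp 2 ξ) i.castSucc = ξ i := by
  simp [hypLift]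
lemma hypLift_l (ξ : Fin (m + l + m) → ℝ) :
    hypLift (m + l + m + 1) m (WithLp.toLp 2 ξ) (Fin.last _) = hypQ (m + l + m + 1) m (WithLp.toLp 2 ξ) := by
  simp [hypLift]

/-- frequency shear -/
def shT (m l : ℕ) : (Fin (m + l + m) → ℝ) →ₗ[ℝ] (Fin (m + l + m) → ℝ) where
  toFun u := mk3 (fun q => u (ja m l q)) (fun q => u (jb m l q)) (fun q => u (jc m l q) + u (ja m l q))
  map_add' u v := by
    funext i
    refine forall3 (fun q => ?_) (fun q => ?_) (fun q => ?_) i <;> simp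
    ring
  map_smul' t u := by
    funext i
    refine forall3 (fun q => ?_) (fun q => ?_) (fun q => ?_) i <;> simp
    ring

lemma shT_apply (u : Fin (m + l + m) → ℝ) : shT m l u =
  mk3 (fun q => u (ja m l q)) (fun q => u (jb m l q)) (fun q => u (jc m l q) + u (ja m l q)) := rfl

lemma shT_det (m l : ℕ) : LinearMap.det (shT m l) ≠ 0 := by
  have hinj : Function.Injective (shT m l) := by
    rw [injective_iff_map_eq_zero]
    intro u hu
    rw [shT_apply] at hu
    have ha : ∀ q, u (ja m l q) = 0 := fun q => by simpa using congrFun hu (ja m l q)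
    funext i
    refine forall3 ha (fun q => ?_) (fun q => ?_) i
    · simpa using congrFun hu (jb m l q)
    · simpa [ha] using congrFun hu (jc m l q)
  have := (LinearEquiv.ofInjectiveEndo _ hinj).isUnit_det'
  exact this.ne_zero

/-- space shear -/
def shA (m l : ℕ) (y : Fin (m + l + m + 1) → ℝ) : Fin (m + l + m + 1) → ℝ :=
  mk4 (fun q => y (ja m l q).castSucc) (fun q => y (jb m l q).castSucc)
    (fun q => y (jc m l q).castSucc - y (ja m l q).castSucc) (y (Fin.last _))

lemma shA_cont (m l : ℕ) : Continuous (shA m l) := by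
  refine continuous_pi fun i => ?_
  refine Fin.lastCases ?_ (fun i => ?_) i
  · simp only [shA, mk4_l]; fun_prop
  · refine forall3 (fun q => ?_) (fun q => ?_) (fun q => ?_) i <;> simp only [shA, mk4_s, mk3_a, mk3_b, mk3_c] <;> fun_prop

lemma shA_dist (y z : Fin (m + l + m + 1) → ℝ) (k) :
    |y k - z k| / 2 ≤ dist (WithLp.toLp 2 (shA m l y) : EuclideanSpace ℝ _) (WithLp.toLp 2 (shA m l z)) := by
  have h0 : ∀ k, |shA m l y k - shA m l z k| ≤ dist (WithLp.toLp 2 (shA m l y) : EuclideanSpace ℝ _) (WithLp.toLp 2 (shA m l z)) := by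
    intro k
    rw [dist_eq_norm]
    have := PiLp.norm_apply_le ((WithLp.toLp 2 (shA m l y) : EuclideanSpace ℝ _) - (WithLp.toLp 2 (shA m l z))) k
    simpa using this
  set D := dist (WithLp.toLp 2 (shA m l y) : EuclideanSpace ℝ _) (WithLp.toLp 2 (shA m l z))
  have hD : 0 ≤ D := dist_nonneg
  rw [div_le_iff₀ (by norm_num)]
  refine Fin.lastCases ?_ (fun i => ?_) k
  · have := h0 (Fin.last _)
    simp only [shA, mk4_l] at this; linarith
  · refine forall3 (fun q => ?_) (fun q => ?_) (fun q => ?_) i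
    · have := h0 (ja m l q).castSucc
      simp only [shA, mk4_s, mk3_a] at this; linarith
    · have := h0 (jb m l q).castSucc
      simp only [shA, mk4_s, mk3_b] at this; linarith
    · have h1 := h0 (ja m l q).castSucc
      have h2 := h0 (jc m l q).castSucc
      simp only [shA, mk4_s, mk3_a, mk3_c] at h1 h2
      rw [abs_le] at *
      constructor <;> linarith

lemma abs_mul_le' {a b x y : ℝ} (ha : |a| ≤ x) (hb : |b| ≤ y) : |a * b| ≤ x * y := by
  rw [abs_mul]; exact mul_le_mul ha hb (abs_nonneg _) ((abs_nonneg _).trans ha)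

lemma phase_bound {c R : ℝ} (hc : 0 < c) (hc' : 6 * ((m + l + m + 1 : ℕ) : ℝ) * c ≤ 1) (hR : 1 < R)
    (y : Fin (m + l + m + 1) → ℝ) (hy : ∀ k, |y k| ≤ mk4 (fun _ : Fin m => c) (fun _ : Fin l => c) (fun _ => c / R) c k)
    (u : Fin (m + l + m) → ℝ) (hu : ∀ k, |u k| ≤ mk3 (fun _ : Fin m => c) (fun _ : Fin l => c / R) (fun _ => c / R) k) :
    |∑ k, shA m l y k * (R • hypLift (m + l + m + 1) m (WithLp.toLp 2 (shT m l u))) k| ≤ 1 := by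
  have hR0 : 0 < R := by linarith
  have hya : ∀ q, |y (ja m l q).castSucc| ≤ c := fun q => by simpa using hy (ja m l q).castSucc
  have hyb : ∀ q, |y (jb m l q).castSucc| ≤ c := fun q => by simpa using hy (jb m l q).castSucc
  have hyc : ∀ q, |y (jc m l q).castSucc| ≤ c / R := fun q => by simpa using hy (jc m l q).castSucc
  have hyl : |y (Fin.last _)| ≤ c := by simpa using hy (Fin.last _)
  have hua : ∀ q, |u (ja m l q)| ≤ c := fun q => by simpa using hu (ja m l q)
  have hub : ∀ q, |u (jb m l q)| ≤ c / R := fun q => by simpa using hu (jb m l q)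
  have huc : ∀ q, |u (jc m l q)| ≤ c / R := fun q => by simpa using hu (jc m l q)
  set yn := y (Fin.last _) with hyn
  have e : ∑ k, shA m l y k * (R • hypLift (m + l + m + 1) m (WithLp.toLp 2 (shT m l u))) k =
      ∑ q, (y (jb m l q).castSucc * (R * u (jb m l q)) + yn * ((R * u (jb m l q)) * u (jb m l q))) +
      ∑ q, ((R * y (jc m l q).castSucc) * u (jc m l q) + (R * y (jc m l q).castSucc) * u (ja m l q)
        - y (ja m l q).castSucc * (R * u (jc m l q))
        - yn * ((R * u (jc m l q)) * u (jc m l q) + 2 * ((R * u (jc m l q)) * u (ja m l q)))) := by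
    rw [Fin.sum_univ_castSucc, sum3]
    simp only [PiLp.smul_apply, hypLift_s, hypLift_l, hypQ_blk, shA, shT_apply, mk4_s, mk4_l, mk3_a, mk3_b, mk3_c, smul_eq_mul]
    rw [← hyn]
    have : yn * (R * (∑ q, u (ja m l q) ^ 2 + ∑ q, u (jb m l q) ^ 2 - ∑ q, (u (jc m l q) + u (ja m l q)) ^ 2)) =
      ∑ q, yn * (R * u (ja m l q) ^ 2) + ∑ q, yn * (R * u (jb m l q) ^ 2) - ∑ q, yn * (R * (u (jc m l q) + u (ja m l q)) ^ 2) := by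
      simp only [← Finset.mul_sum]; ring
    rw [this]
    have aux : ∀ A B C D E F : ℝ, A + B + C + (D + E - F) = (B + E) + (A + C + D - F) := by intros; ring
    rw [aux, ← Finset.sum_add_distrib, ← Finset.sum_add_distrib, ← Finset.sum_add_distrib, ← Finset.sum_sub_distrib]
    congr 1
    · refine Finset.sum_congr rfl fun q _ => ?_
      ring
    · refine Finset.sum_congr rfl fun q _ => ?_
      ring
  rw [e]
  have hc1 : c ≤ 1 := by
    have : (1:ℝ) ≤ ((m + l + m + 1 : ℕ) : ℝ) := by exact_mod_cast Nat.le_add_left 1 _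
    nlinarith
  have hcR : c / R ≤ c := div_le_self hc.le hR.le
  have hRm : ∀ t, |t| ≤ c / R → |R * t| ≤ c := fun t ht => by
    rw [abs_mul, abs_of_pos hR0]
    calc R * |t| ≤ R * (c / R) := by gcongr
      _ = c := by field_simp
  have b1 : ∀ q, |y (jb m l q).castSucc * (R * u (jb m l q)) + yn * ((R * u (jb m l q)) * u (jb m l q))| ≤ 6 * c ^ 2 := by
    intro q
    have t1 := abs_mul_le' (hyb q) (hRm _ (hub q))
    have t2 := abs_mul_le' (hyl.trans hc1) (abs_mul_le' (hRm _ (hub q)) ((hub q).trans hcR))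
    refine (abs_add_le _ _).trans ?_
    nlinarith
  have b2 : ∀ q, |(R * y (jc m l q).castSucc) * u (jc m l q) + (R * y (jc m l q).castSucc) * u (ja m l q)
        - y (ja m l q).castSucc * (R * u (jc m l q))
        - yn * ((R * u (jc m l q)) * u (jc m l q) + 2 * ((R * u (jc m l q)) * u (ja m l q)))| ≤ 6 * c ^ 2 := by
    intro q
    have t1 := abs_mul_le' (hRm _ (hyc q)) ((huc q).trans hcR)
    have t2 := abs_mul_le' (hRm _ (hyc q)) (hua q)
    have t3 := abs_mul_le' (hya q) (hRm _ (huc q))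
    have t4 := abs_mul_le' (hRm _ (huc q)) ((huc q).trans hcR)
    have t5 := abs_mul_le' (hRm _ (huc q)) (hua q)
    have t6 : |(R * u (jc m l q)) * u (jc m l q) + 2 * ((R * u (jc m l q)) * u (ja m l q))| ≤ 3 * (c * c) := by
      rw [abs_le] at *; constructor <;> linarith
    have t7 := abs_mul_le' (hyl.trans hc1) t6
    rw [abs_le] at *; constructor <;> nlinarith
  have s1 : |∑ q, (y (jb m l q).castSucc * (R * u (jb m l q)) + yn * ((R * u (jb m l q)) * u (jb m l q)))| ≤ l * (6 * c ^ 2) := by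
    refine (Finset.abs_sum_le_sum_abs _ _).trans ((Finset.sum_le_sum fun q _ => b1 q).trans ?_)
    simp
  have s2 : |∑ q, ((R * y (jc m l q).castSucc) * u (jc m l q) + (R * y (jc m l q).castSucc) * u (ja m l q)
        - y (ja m l q).castSucc * (R * u (jc m l q))
        - yn * ((R * u (jc m l q)) * u (jc m l q) + 2 * ((R * u (jc m l q)) * u (ja m l q))))| ≤ m * (6 * c ^ 2) := by
    refine (Finset.abs_sum_le_sum_abs _ _).trans ((Finset.sum_le_sum fun q _ => b2 q).trans ?_)
    simp
  refine (abs_add_le _ _).trans ((add_le_add s1 s2).trans ?_)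
  push_cast at hc'
  have hm0 : (0:ℝ) ≤ m := Nat.cast_nonneg _
  have hl0 : (0:ℝ) ≤ l := Nat.cast_nonneg _
  have : 6 * ((l:ℝ) + m) * c ≤ 1 := by nlinarith
  nlinarith [mul_nonneg (add_nonneg hl0 hm0) hc.le]

end blocks

lemma lint_pi {n : ℕ} (μ : Fin n → Measure ℝ) [∀ i, SigmaFinite (μ i)] (f : Fin n → ℝ → ℝ≥0∞)
    (hf : ∀ i, Measurable (f i)) :
    ∫⁻ x : Fin n → ℝ, ∏ i, f i (x i) ∂(Measure.pi μ) = ∏ i, ∫⁻ x, f i x ∂(μ i) := by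
  induction n with
  | zero => simp
  | succ n ih =>
    have h1 := (measurePreserving_piFinSuccAbove μ 0).symm
    rw [← h1.lintegral_comp (by
      refine Finset.measurable_prod _ fun i _ => ?_
      exact (hf i).comp (measurable_pi_apply i))]
    rw [Fin.prod_univ_succ, ← ih (fun i => μ i.succ) (fun i => f i.succ) (fun i => hf _), ← lintegral_prod_mul (hf 0).aemeasurable
      (Measurable.aemeasurable (by
        refine Finset.measurable_prod _ fun i _ => ?_
        exact (hf _).comp (measurable_pi_apply i)))]
    simp_rw [MeasurableEquiv.piFinSuccAbove_symm_apply, Fin.insertNthEquiv,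
            Fin.prod_univ_succ, Fin.insertNth_zero, Equiv.coe_fn_mk, Fin.cons_succ,
            Fin.zero_succAbove, Fin.cons_zero]
    rfl

def KK (a : ℝ) : ℝ := 2 * (2 ^ a * (2 ^ (1 - a) / (1 - a)))

lemma oneD {a r y : ℝ} (ha0 : 0 < a) (ha : a < 1) (hr : 0 < r) (hy : |y| ≤ r) :
    ∫⁻ t in Set.Icc (-r) r, ENNReal.ofReal (|y - t| / 2) ^ (-a) ≤ ENNReal.ofReal (KK a * r ^ (1 - a)) := by
  set G : ℝ → ℝ≥0∞ := fun s => ENNReal.ofReal (|s| / 2) ^ (-a) with hG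
  have hGm : Measurable G := by fun_prop
  have hpos : ∫⁻ s in Set.Icc 0 (2 * r), G s ≤ ENNReal.ofReal (2 ^ a * (2 ^ (1 - a) / (1 - a)) * r ^ (1 - a)) := by
    rw [setLIntegral_congr Ioc_ae_eq_Icc.symm]
    have e1 : ∫⁻ s in Set.Ioc 0 (2 * r), G s = ∫⁻ s in Set.Ioc 0 (2 * r), ENNReal.ofReal (2 ^ a * s ^ (-a)) := by
      refine setLIntegral_congr_fun measurableSet_Ioc fun s hs => ?_
      have hs0 : 0 < s := hs.1
      simp only [hG]
      rw [abs_of_pos hs0, ENNReal.ofReal_rpow_of_pos (by positivity), Real.div_rpow hs0.le (by norm_num),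
        Real.rpow_neg (by norm_num : (0:ℝ) ≤ 2)]
      congr 1; field_simp
    have hii : IntervalIntegrable (fun s : ℝ => 2 ^ a * s ^ (-a)) volume 0 (2 * r) :=
      (intervalIntegral.intervalIntegrable_rpow' (by linarith)).const_mul _
    rw [e1, ← ofReal_integral_eq_lintegral_ofReal ((intervalIntegrable_iff_integrableOn_Ioc_of_le (by positivity)).1 hii)
      ((ae_restrict_iff' measurableSet_Ioc).2 (Filter.Eventually.of_forall fun s hs => by
        have : 0 < s := hs.1
        positivity)), ← intervalIntegral.integral_of_le (by positivity), intervalIntegral.integral_const_mul,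
        integral_rpow (Or.inl (by linarith)), Real.zero_rpow (by linarith), sub_zero]
    apply ENNReal.ofReal_le_ofReal
    rw [Real.mul_rpow (by norm_num) hr.le]
    have : -a + 1 = 1 - a := by ring
    rw [this]
    apply le_of_eq; ring
  have hneg : ∫⁻ s in Set.Icc (-(2 * r)) 0, G s = ∫⁻ s in Set.Icc 0 (2 * r), G s := by
    rw [← lintegral_indicator measurableSet_Icc, ← lintegral_indicator measurableSet_Icc,
      ← lintegral_neg_eq_self ]
    congr 1; ext s
    simp only [Set.indicator, Set.mem_Icc, hG, abs_neg]
    congr 1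
    rw [eq_iff_iff]
    constructor <;> rintro ⟨h1, h2⟩ <;> constructor <;> linarith
  calc ∫⁻ t in Set.Icc (-r) r, G (y - t)
      ≤ ∫⁻ t, (Set.Icc (-(2 * r)) (2 * r)).indicator G (y - t) := by
        rw [← lintegral_indicator measurableSet_Icc]
        refine lintegral_mono fun t => ?_
        by_cases ht : t ∈ Set.Icc (-r) r
        · rw [Set.indicator_of_mem ht, Set.indicator_of_mem]
          rw [abs_le] at hy
          constructor <;> linarith [ht.1, ht.2, hy.1, hy.2]
        · rw [Set.indicator_of_notMem ht]; exact zero_le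
    _ = ∫⁻ t in Set.Icc (-(2 * r)) (2 * r), G t := by
        rw [lintegral_sub_left_eq_self, lintegral_indicator measurableSet_Icc]
    _ ≤ ∫⁻ t in Set.Icc (-(2 * r)) 0 ∪ Set.Icc 0 (2 * r), G t := by
        refine lintegral_mono_set ?_
        rw [Set.Icc_union_Icc_eq_Icc] <;> linarith
    _ ≤ _ := (lintegral_union_le _ _ _)
    _ ≤ ENNReal.ofReal (2 ^ a * (2 ^ (1 - a) / (1 - a)) * r ^ (1 - a)) + ENNReal.ofReal (2 ^ a * (2 ^ (1 - a) / (1 - a)) * r ^ (1 - a)) := by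
        rw [hneg]; gcongr
    _ = _ := by
        have : 0 < 1 - a := by linarith
        rw [← ENNReal.ofReal_add (by positivity) (by positivity), KK]
        congr 1; ring

lemma rpow_prod {n : ℕ} (D : ℝ≥0∞) (hD : D ≠ ⊤) (a : Fin n → ℝ) (ha : ∀ k, 0 < a k) :
    D ^ (-∑ k, a k) = ∏ k, D ^ (-a k) := by
  simp_rw [ENNReal.rpow_neg]
  rw [← ENNReal.prod_inv_distrib]
  · congr 1
    induction n with
    | zero => simp
    | succ n ih =>
      rw [Fin.sum_univ_succ, Fin.prod_univ_succ, ENNReal.rpow_add_of_nonneg _ _ (ha 0).le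
        (Finset.sum_nonneg fun i _ => (ha _).le), ih _ fun k => ha _]
  · intro i _ j _ _
    right
    exact ENNReal.rpow_ne_top_of_nonneg (ha j).le hD

/-- box -/
def boxM {N : ℕ} (r : Fin N → ℝ) : Measure (Fin N → ℝ) :=
  Measure.pi fun k => (volume : Measure ℝ).restrict (Set.Icc (-r k) (r k))

instance {N : ℕ} (r : Fin N → ℝ) : IsFiniteMeasure (boxM r) := by
  unfold boxM; infer_instance

lemma box_mem {N : ℕ} (r : Fin N → ℝ) : ∀ᵐ y ∂(boxM r), ∀ k, |y k| ≤ r k := by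
  rw [ae_all_iff]
  intro k
  have : ∀ᵐ t ∂((volume : Measure ℝ).restrict (Set.Icc (-r k) (r k))), |t| ≤ r k :=
    (ae_restrict_iff' measurableSet_Icc).2 (Filter.Eventually.of_forall fun t ht => abs_le.2 ht)
  exact (Measure.quasiMeasurePreserving_eval
    (fun k => (volume : Measure ℝ).restrict (Set.Icc (-r k) (r k))) k).ae this

lemma box_mass {N : ℕ} (r : Fin N → ℝ) (hr : ∀ k, 0 < r k) :
    boxM r Set.univ = ENNReal.ofReal (∏ k, 2 * r k) := by
  rw [boxM, Measure.pi_univ, ENNReal.ofReal_prod_of_nonneg (fun k _ => by have := hr k; positivity)]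
  refine Finset.prod_congr rfl fun k _ => ?_
  rw [Measure.restrict_apply_univ, Real.volume_Icc]; congr 1; ring

/-- energy bound for the pushforward of a box measure under an expanding map. -/
lemma energy_box {N : ℕ} (r a : Fin N → ℝ) (hr : ∀ k, 0 < r k) (ha0 : ∀ k, 0 < a k) (ha1 : ∀ k, a k < 1)
    {α : ℝ} (hα : ∑ k, a k = α) (A : (Fin N → ℝ) → EuclideanSpace ℝ (Fin N)) (hA : Continuous A)
    (hdist : ∀ y z k, |y k - z k| / 2 ≤ dist (A y) (A z)) :
    energy α ((boxM r).map A) ≤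
      ENNReal.ofReal (∏ k, (2 * r k * (KK (a k) * r k ^ (1 - a k)))) := by
  set P := boxM r with hP
  have hK : ∀ k, 0 ≤ KK (a k) * r k ^ (1 - a k) := fun k => by
    have := ha1 k
    have : 0 < 1 - a k := by linarith
    have := hr k
    rw [KK]; positivity
  have hmem := box_mem r
  have hmass := box_mass r hr
  rw [← hP] at hmem hmass
  have hm : Measurable fun p : EuclideanSpace ℝ (Fin N) × EuclideanSpace ℝ (Fin N) =>
    ENNReal.ofReal (dist p.1 p.2) ^ (-α) := by fun_prop
  rw [energy, lintegral_map hm.lintegral_prod_right' hA.measurable]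
  have inner : ∀ᵐ y ∂P, ∫⁻ z, ENNReal.ofReal (dist (A y) z) ^ (-α) ∂(P.map A) ≤
      ENNReal.ofReal (∏ k, (KK (a k) * r k ^ (1 - a k))) := by
    filter_upwards [hmem] with y hy
    rw [lintegral_map (by fun_prop) hA.measurable]
    calc _ ≤ ∫⁻ z, ∏ k, ENNReal.ofReal (|y k - z k| / 2) ^ (-a k) ∂P := by
          refine lintegral_mono fun z => ?_
          rw [← hα, rpow_prod _ ENNReal.ofReal_ne_top a ha0]
          refine Finset.prod_le_prod' fun k _ => ?_
          rw [ENNReal.rpow_neg, ENNReal.rpow_neg, ENNReal.inv_le_inv]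
          exact ENNReal.rpow_le_rpow (ENNReal.ofReal_le_ofReal (hdist y z k)) (ha0 k).le
      _ = ∏ k, ∫⁻ t in Set.Icc (-r k) (r k), ENNReal.ofReal (|y k - t| / 2) ^ (-a k) :=
          lint_pi _ (fun k t => ENNReal.ofReal (|y k - t| / 2) ^ (-a k)) (fun k => by fun_prop)
      _ ≤ ∏ k, ENNReal.ofReal (KK (a k) * r k ^ (1 - a k)) :=
          Finset.prod_le_prod' fun k _ => oneD (ha0 k) (ha1 k) (hr k) (hy k)
      _ = _ := by rw [ENNReal.ofReal_prod_of_nonneg fun k _ => hK k]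
  refine (lintegral_mono_ae inner).trans ?_
  rw [lintegral_const, hmass, ← ENNReal.ofReal_mul (Finset.prod_nonneg fun k _ => hK k), ← Finset.prod_mul_distrib]
  apply le_of_eq
  congr 1
  refine Finset.prod_congr rfl fun k _ => ?_
  ring

lemma ft_lower {N : ℕ} (P : Measure (Fin N → ℝ)) [IsFiniteMeasure P] (A : (Fin N → ℝ) → EuclideanSpace ℝ (Fin N))
    (hA : Continuous A) (ζ : EuclideanSpace ℝ (Fin N)) (h : ∀ᵐ y ∂P, |∑ k, A y k * ζ k| ≤ 1) :
    P.real Set.univ / 2 ≤ ‖ftM (P.map A) ζ‖ := by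
  set θ : (Fin N → ℝ) → ℝ := fun y => ∑ k, A y k * ζ k with hθ
  have hc : Continuous θ := by
    rw [hθ]; fun_prop
  have e1 : ftM (P.map A) ζ = ∫ y, Complex.exp (-(Complex.I * ((θ y : ℝ) : ℂ))) ∂P := by
    rw [ftM, integral_map hA.measurable.aemeasurable (Continuous.aestronglyMeasurable (by fun_prop))]
  have hint : Integrable (fun y => Complex.exp (-(Complex.I * ((θ y : ℝ) : ℂ)))) P := by
    refine Integrable.of_bound (Continuous.aestronglyMeasurable (by fun_prop)) 1 (Filter.Eventually.of_forall fun y => ?_)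
    rw [Complex.norm_exp]; simp
  have e2 : (ftM (P.map A) ζ).re = ∫ y, Real.cos (θ y) ∂P := by
    rw [e1, ← RCLike.re_eq_complex_re, ← integral_re hint]
    refine integral_congr_ae (Filter.Eventually.of_forall fun y => ?_)
    simp [Complex.exp_re]
  refine le_trans ?_ ((Complex.abs_re_le_norm _).trans' (le_abs_self _))
  rw [e2]
  have : ∫ y, (1 / 2 : ℝ) ∂P = P.real Set.univ / 2 := by
    rw [integral_const, smul_eq_mul]; ring
  rw [← this]
  refine integral_mono_ae (integrable_const _) ?_ ?_
  · refine Integrable.of_bound (Continuous.aestronglyMeasurable (by fun_prop)) 1 (Filter.Eventually.of_forall fun y => ?_)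
    exact Real.abs_cos_le_one _
  · filter_upwards [h] with y hy
    have h1 := Real.one_sub_sq_div_two_le_cos (x := θ y)
    have h2 : θ y ^ 2 ≤ 1 := by
      rw [← sq_abs]; exact pow_le_one₀ (abs_nonneg _) hy
    change 1 / 2 ≤ Real.cos (θ y)
    linarith

lemma avg_lower (d m : ℕ) (μ : Measure (EuclideanSpace ℝ (Fin d))) [IsFiniteMeasure μ] (R κ : ℝ) (hκ : 0 ≤ κ)
    (S : Set (EuclideanSpace ℝ (Fin (d - 1)))) (hS : MeasurableSet S) (hSb : S ⊆ ball 0 1)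
    (h : ∀ ξ ∈ S, κ ≤ ‖ftM μ (R • hypLift d m ξ)‖) : κ ^ 2 * volume.real S ≤ hypAvg d m μ R := by
  have hfin : volume S ≠ ⊤ := ((measure_mono hSb).trans_lt measure_ball_lt_top).ne
  have hint : IntegrableOn (fun ξ => ‖ftM μ (R • hypLift d m ξ)‖ ^ 2 * Real.sqrt (1 + 4 * ‖ξ‖ ^ 2)) (ball 0 1) := by
    refine Measure.integrableOn_of_bounded (M := (μ.real Set.univ) ^ 2 * Real.sqrt 5) measure_ball_lt_top.ne
      (avg_meas d m μ R).aestronglyMeasurable ?_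
    refine (ae_restrict_iff' measurableSet_ball).2 (Filter.Eventually.of_forall fun ξ hξ => ?_)
    rw [Real.norm_of_nonneg (by positivity)]
    have h1 : ‖ftM μ (R • hypLift d m ξ)‖ ≤ μ.real Set.univ := by
      rw [ftM]
      refine (norm_integral_le_of_norm_le_const (C := 1) (Filter.Eventually.of_forall fun y => ?_)).trans (by simp)
      rw [Complex.norm_exp]; simp
    rw [mem_ball_zero_iff] at hξ
    have h2 : ‖ξ‖ ^ 2 ≤ 1 := pow_le_one₀ (norm_nonneg _) hξ.le
    gcongr
    linarith
  rw [hypAvg]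
  refine le_trans ?_ (setIntegral_mono_set hint (Filter.Eventually.of_forall fun ξ => by
    change 0 ≤ _; positivity) (LE.le.eventuallyLE hSb))
  refine setIntegral_ge_of_const_le_real hS hfin (fun ξ hξ => ?_) (hint.mono_set hSb)
  have h1 := h ξ hξ
  have h2 : 1 ≤ Real.sqrt (1 + 4 * ‖ξ‖ ^ 2) := by
    rw [Real.one_le_sqrt]; nlinarith [sq_nonneg ‖ξ‖]
  calc κ ^ 2 = κ ^ 2 * 1 := by ring
    _ ≤ _ := by gcongr

lemma norm_le_one_of {N : ℕ} (x : EuclideanSpace ℝ (Fin N)) {c : ℝ} (hc : 0 ≤ c) (hN : 4 * (N : ℝ) * c ^ 2 < 1)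
    (h : ∀ k, |x k| ≤ 2 * c) : ‖x‖ < 1 := by
  rw [← sq_lt_one_iff₀ (norm_nonneg _), EuclideanSpace.norm_sq_eq]
  refine lt_of_le_of_lt (Finset.sum_le_sum (g := fun _ => (2 * c) ^ 2) fun k _ => ?_) ?_
  · rw [Real.norm_eq_abs]; exact pow_le_pow_left₀ (abs_nonneg _) (h k) 2
  · simp; nlinarith

lemma set_S (m l : ℕ) (s : Fin (m + l + m) → ℝ) (hs : ∀ k, 0 < s k) :
    ∃ S : Set (EuclideanSpace ℝ (Fin (m + l + m))), MeasurableSet S ∧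
      volume.real S = |LinearMap.det (shT m l)| * ∏ k, 2 * s k ∧
      ∀ ξ ∈ S, ∃ u : Fin (m + l + m) → ℝ, (∀ k, |u k| ≤ s k) ∧ ξ = WithLp.toLp 2 (shT m l u) := by
  set B : Set (Fin (m + l + m) → ℝ) := Set.pi Set.univ fun k => Set.Icc (-s k) (s k) with hB
  have hBc : IsCompact B := isCompact_univ_pi fun k => isCompact_Icc
  have hm : MeasurableSet (shT m l '' B) :=
    (hBc.image (LinearMap.continuous_of_finiteDimensional _)).isClosed.measurableSet
  have hmp := PiLp.volume_preserving_ofLp (Fin (m + l + m))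
  refine ⟨WithLp.ofLp ⁻¹' (shT m l '' B), hmp.measurable hm, ?_, ?_⟩
  · rw [Measure.real, hmp.measure_preimage hm.nullMeasurableSet, Measure.addHaar_image_linearMap, hB,
      volume_pi_pi, ENNReal.toReal_mul, ENNReal.toReal_ofReal (abs_nonneg _), ENNReal.toReal_prod]
    congr 1
    refine Finset.prod_congr rfl fun k _ => ?_
    have := hs k
    rw [Real.volume_Icc, ENNReal.toReal_ofReal] <;> linarith
  · rintro ξ ⟨u, hu, hξ⟩
    refine ⟨u, fun k => abs_le.2 (hu k trivial), ?_⟩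
    rw [hξ]

lemma energy_pos' {d : ℕ} {α : ℝ} (hα : 0 < α) (μ : Measure (EuclideanSpace ℝ (Fin d))) [IsFiniteMeasure μ] (hμ : μ ≠ 0) :
    0 < energy α μ := by
  have hm : Measurable fun p : EuclideanSpace ℝ (Fin d) × EuclideanSpace ℝ (Fin d) =>
    ENNReal.ofReal (dist p.1 p.2) ^ (-α) := by fun_prop
  have hμ' : μ Set.univ ≠ 0 := by simpa using hμ
  have pos : ∀ x y : EuclideanSpace ℝ (Fin d), 0 < ENNReal.ofReal (dist x y) ^ (-α) := fun x y => by
    rw [ENNReal.rpow_neg, ENNReal.inv_pos]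
    exact ENNReal.rpow_ne_top_of_nonneg hα.le ENNReal.ofReal_ne_top
  rw [energy, lintegral_pos_iff_support hm.lintegral_prod_right']
  have : Function.support (fun x : EuclideanSpace ℝ (Fin d) => ∫⁻ y, ENNReal.ofReal (dist x y) ^ (-α) ∂μ) = Set.univ := by
    ext x
    simp only [Function.mem_support, Set.mem_univ, iff_true]
    refine ne_of_gt ((lintegral_pos_iff_support (by fun_prop)).2 ?_)
    have : Function.support (fun y => ENNReal.ofReal (dist x y) ^ (-α)) = Set.univ := by
      ext y; simpa using (pos x y).ne'
    rw [this]; exact pos_iff_ne_zero.2 hμ'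
  rw [this]; exact pos_iff_ne_zero.2 hμ'

lemma construct (m l : ℕ) {c R q p α : ℝ} (hc : 0 < c) (hc' : 6 * ((m + l + m + 1 : ℕ) : ℝ) * c ≤ 1) (hR : 1 < R)
    (hq0 : 0 < q) (hq1 : q < 1) (hp0 : 0 < p) (hp1 : p < 1) (hα : ((m : ℝ) + l + 1) * q + m * p = α) :
    ∃ μ : Measure (EuclideanSpace ℝ (Fin (m + l + m + 1))), IsFiniteMeasure μ ∧
      μ ((closedBall 0 1)ᶜ) = 0 ∧ 0 < energy α μ ∧ energy α μ ≠ ⊤ ∧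
      (energy α μ).toReal ≤ (2 * c * (KK q * c ^ (1 - q))) ^ (m + l + 1) *
        (2 * (c / R) * (KK p * (c / R) ^ (1 - p))) ^ m ∧
      ((2 * c) ^ (m + l + 1) * (2 * (c / R)) ^ m / 2) ^ 2 *
        (|LinearMap.det (shT m l)| * ((2 * c) ^ m * (2 * (c / R)) ^ (l + m))) ≤
        hypAvg (m + l + m + 1) m μ R := by
  have hR0 : 0 < R := by linarith
  have hcR : c / R ≤ c := div_le_self hc.le hR.le
  have hcR0 : 0 < c / R := by positivity
  have hN : 1 ≤ ((m + l + m + 1 : ℕ) : ℝ) := by exact_mod_cast Nat.le_add_left 1 _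
  have hc1 : 6 * c ≤ 1 := by nlinarith
  have hNc : 4 * ((m + l + m + 1 : ℕ) : ℝ) * c ^ 2 < 1 := by nlinarith
  set r : Fin (m + l + m + 1) → ℝ := mk4 (fun _ : Fin m => c) (fun _ : Fin l => c) (fun _ => c / R) c with hr
  set a : Fin (m + l + m + 1) → ℝ := mk4 (fun _ : Fin m => q) (fun _ : Fin l => q) (fun _ => p) q with ha
  set s : Fin (m + l + m) → ℝ := mk3 (fun _ : Fin m => c) (fun _ : Fin l => c / R) (fun _ => c / R) with hs
  have all4 : ∀ Q : Fin (m + l + m + 1) → Prop, (∀ i, Q (ja m l i).castSucc) → (∀ i, Q (jb m l i).castSucc) →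
      (∀ i, Q (jc m l i).castSucc) → Q (Fin.last _) → ∀ k, Q k := by
    intro Q h1 h2 h3 h4 k
    refine Fin.lastCases h4 (fun i => ?_) k
    exact forall3 (P := fun i => Q i.castSucc) h1 h2 h3 i
  have hr0 : ∀ k, 0 < r k := all4 _ (fun i => by simpa [hr]) (fun i => by simpa [hr]) (fun i => by simpa [hr] using hcR0) (by simpa [hr])
  have hrc : ∀ k, r k ≤ c := all4 _ (fun i => by simp [hr]) (fun i => by simp [hr]) (fun i => by simpa [hr]) (by simp [hr])
  have ha0 : ∀ k, 0 < a k := all4 _ (fun i => by simpa [ha]) (fun i => by simpa [ha]) (fun i => by simpa [ha]) (by simpa [ha])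
  have ha1 : ∀ k, a k < 1 := all4 _ (fun i => by simpa [ha]) (fun i => by simpa [ha]) (fun i => by simpa [ha]) (by simpa [ha])
  have hs0 : ∀ k, 0 < s k := fun k => by
    refine forall3 (P := fun k => 0 < s k) (fun i => ?_) (fun i => ?_) (fun i => ?_) k
    · simpa [hs]
    · simpa [hs] using hcR0
    · simpa [hs] using hcR0
  have hsc : ∀ k, s k ≤ c := fun k => by
    refine forall3 (P := fun k => s k ≤ c) (fun i => ?_) (fun i => ?_) (fun i => ?_) k <;> simpa [hs]
  have hsum : ∑ k, a k = α := by
    rw [Fin.sum_univ_castSucc, sum3, ← hα]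
    simp [ha]; ring
  have hα0 : 0 < α := by rw [← hα]; positivity
  set A : (Fin (m + l + m + 1) → ℝ) → EuclideanSpace ℝ (Fin (m + l + m + 1)) := fun y => WithLp.toLp 2 (shA m l y) with hA
  have hAc : Continuous A := (PiLp.continuous_toLp 2 _).comp (shA_cont m l)
  have hen := energy_box r a hr0 ha0 ha1 hsum A hAc (fun y z k => shA_dist y z k)
  have hmass := box_mass r hr0
  have hp : ∏ k, 2 * r k = (2 * c) ^ (m + l + 1) * (2 * (c / R)) ^ m := by
    rw [Fin.prod_univ_castSucc, prod3]
    simp only [hr, mk4_s, mk4_l, mk3_a, mk3_b, mk3_c, Finset.prod_const, Finset.card_univ, Fintype.card_fin]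
    ring
  have hpe : ∏ k, (2 * r k * (KK (a k) * r k ^ (1 - a k))) = (2 * c * (KK q * c ^ (1 - q))) ^ (m + l + 1) *
        (2 * (c / R) * (KK p * (c / R) ^ (1 - p))) ^ m := by
    rw [Fin.prod_univ_castSucc, prod3]
    simp only [hr, ha, mk4_s, mk4_l, mk3_a, mk3_b, mk3_c, Finset.prod_const, Finset.card_univ, Fintype.card_fin]
    rw [pow_succ, pow_add]; ac_rfl
  have hps : ∏ k, 2 * s k = (2 * c) ^ m * (2 * (c / R)) ^ (l + m) := by
    rw [prod3]
    simp only [hs, mk3_a, mk3_b, mk3_c, Finset.prod_const, Finset.card_univ, Fintype.card_fin]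
    ring
  have hKK : ∀ x : ℝ, x < 1 → 0 < KK x := fun x hx => by
    have : 0 < 1 - x := by linarith
    rw [KK]; positivity
  have hKq := hKK q hq1
  have hKp := hKK p hp1
  rw [hpe] at hen
  rw [hp] at hmass
  refine ⟨(boxM r).map A, inferInstance, ?_, ?_, ?_, ?_, ?_⟩
  · rw [Measure.map_apply hAc.measurable isClosed_closedBall.measurableSet.compl]
    refine measure_mono_null ?_ (ae_iff.1 (box_mem r))
    intro y hy hy'
    apply hy
    rw [mem_closedBall_zero_iff]
    refine (norm_le_one_of (A y) hc.le hNc ?_).le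
    have hyc : ∀ k, |y k| ≤ c := fun k => (hy' k).trans (hrc k)
    refine all4 _ (fun i => ?_) (fun i => ?_) (fun i => ?_) ?_
    · have := hyc (ja m l i).castSucc
      simp only [hA, shA, mk4_s, mk3_a]; linarith
    · have := hyc (jb m l i).castSucc
      simp only [hA, shA, mk4_s, mk3_b]; linarith
    · have h1 := hyc (ja m l i).castSucc
      have h2 := hyc (jc m l i).castSucc
      simp only [hA, shA, mk4_s, mk3_c]
      rw [abs_le] at *
      constructor <;> linarith
    · have := hyc (Fin.last _)
      simp only [hA, shA, mk4_l]; linarith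
  · refine energy_pos' hα0 _ ?_
    intro h0
    have : ((boxM r).map A) Set.univ = 0 := by rw [h0]; rfl
    rw [Measure.map_apply hAc.measurable MeasurableSet.univ, Set.preimage_univ, hmass, ENNReal.ofReal_eq_zero] at this
    have h2 : 0 < (2 * c) ^ (m + l + 1) * (2 * (c / R)) ^ m := by positivity
    linarith
  · exact ne_top_of_le_ne_top ENNReal.ofReal_ne_top hen
  · exact ENNReal.toReal_le_of_le_ofReal (by positivity) hen
  · obtain ⟨S, hSm, hSv, hS⟩ := set_S m l s hs0
    rw [← hps, ← hSv]
    have hreal : (boxM r).real Set.univ = (2 * c) ^ (m + l + 1) * (2 * (c / R)) ^ m := by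
      rw [Measure.real, hmass, ENNReal.toReal_ofReal (by positivity)]
    refine avg_lower (m + l + m + 1) m _ R _ (by positivity) S hSm ?_ ?_
    · intro ξ hξ
      obtain ⟨u, hu, rfl⟩ := hS ξ hξ
      have huc : ∀ k, |u k| ≤ c := fun k => (hu k).trans (hsc k)
      rw [mem_ball_zero_iff]
      refine norm_le_one_of _ hc.le (N := m + l + m) ?_ ?_
      · refine lt_of_le_of_lt ?_ hNc
        have hle : ((m + l + m : ℕ) : ℝ) ≤ ((m + l + m + 1 : ℕ) : ℝ) := by exact_mod_cast Nat.le_succ _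
        nlinarith [sq_nonneg c]
      · intro k
        refine forall3 (P := fun k => |(WithLp.toLp 2 (shT m l u) : EuclideanSpace ℝ (Fin (m + l + m))) k| ≤ 2 * c)
          (fun i => ?_) (fun i => ?_) (fun i => ?_) k
        · have := huc (ja m l i)
          simp only [shT_apply, mk3_a]; linarith
        · have := huc (jb m l i)
          simp only [shT_apply, mk3_b]; linarith
        · have h1 := huc (ja m l i)
          have h2 := huc (jc m l i)
          simp only [shT_apply, mk3_c]
          rw [abs_le] at *
          constructor <;> linarith
    · intro ξ hξ
      obtain ⟨u, hu, rfl⟩ := hS ξ hξ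
      rw [← hreal]
      refine ft_lower (boxM r) A hAc _ ?_
      filter_upwards [box_mem r] with y hy
      exact phase_bound hc hc' hR y hy u hu

lemma part_two (m l : ℕ) (hm : 1 ≤ m) {α β : ℝ} (h1 : (m : ℝ) + l + 1 ≤ α) (h2 : α < 2 * m + l + 1) (hβ : α - 1 < β) :
    decayFails (m + l + m + 1) m α β := by
  intro C hC
  have hm0 : (1 : ℝ) ≤ m := by exact_mod_cast hm
  have hl0 : (0 : ℝ) ≤ l := Nat.cast_nonneg _
  obtain ⟨ε, hε0, hε⟩ : ∃ ε : ℝ, 0 < ε ∧ ε < min 1 (min (2 * m + l + 1 - α) (β - (α - 1))) :=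
    exists_between (lt_min one_pos (lt_min (by linarith) (by linarith)))
  rw [lt_min_iff, lt_min_iff] at hε
  obtain ⟨hε1, hε2, hε3⟩ := hε
  set b : ℝ := m + l + 1 - ε with hb
  set q := b / (m + l + 1) with hq
  set p := (α - b) / m with hp
  have hD : (0 : ℝ) < m + l + 1 := by linarith
  have hq0 : 0 < q := div_pos (by linarith) hD
  have hq1 : q < 1 := (div_lt_one hD).2 (by linarith)
  have hp0 : 0 < p := div_pos (by linarith) (by linarith)
  have hp1 : p < 1 := (div_lt_one (by linarith)).2 (by linarith)
  have hmp : m * p = α - b := by rw [hp]; field_simp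
  have hα : ((m : ℝ) + l + 1) * q + m * p = α := by
    rw [hmp, hq]; field_simp; ring
  have hN : 0 < ((m + l + m + 1 : ℕ) : ℝ) := by positivity
  set c : ℝ := 1 / (6 * ((m + l + m + 1 : ℕ) : ℝ)) with hc
  have hc0 : 0 < c := by positivity
  have hc' : 6 * ((m + l + m + 1 : ℕ) : ℝ) * c ≤ 1 := by rw [hc]; field_simp; rfl
  have hKK : ∀ x : ℝ, x < 1 → 0 < KK x := fun x hx => by
    have : 0 < 1 - x := by linarith
    rw [KK]; positivity
  have hKq := hKK q hq1
  have hKp := hKK p hp1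
  have hdet : 0 < |LinearMap.det (shT m l)| := abs_pos.2 (shT_det m l)
  set E0 := (2 * c * (KK q * c ^ (1 - q))) ^ (m + l + 1) * (2 * c * (KK p * c ^ (1 - p))) ^ m with hE0
  set L0 := ((2 * c) ^ (m + l + 1) * (2 * c) ^ m / 2) ^ 2 *
        (|LinearMap.det (shT m l)| * ((2 * c) ^ m * (2 * c) ^ (l + m))) with hL0
  have hL0p : 0 < L0 := by positivity
  set δ := β - (α - 1) - ε with hδ
  have hδ0 : 0 < δ := by linarith
  have ht : Filter.Tendsto (fun R : ℝ => C * E0 * R ^ (-δ)) Filter.atTop (nhds (C * E0 * 0)) :=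
    (tendsto_rpow_neg_atTop hδ0).const_mul _
  rw [mul_zero] at ht
  obtain ⟨R, hR1, hR⟩ := ((ht.eventually (gt_mem_nhds hL0p)).and (Filter.eventually_gt_atTop 1)).exists
  have hR0 : 0 < R := by linarith
  obtain ⟨μ, hμ1, hμ2, hμ3, hμ4, hμ5, hμ6⟩ := construct m l hc0 hc' hR hq0 hq1 hp0 hp1 hα
  refine ⟨μ, hμ1, hμ2, hμ3, hμ4, R, hR, ?_⟩
  have e1 : (2 * c * (KK q * c ^ (1 - q))) ^ (m + l + 1) * (2 * (c / R) * (KK p * (c / R) ^ (1 - p))) ^ m =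
      E0 * R ^ (-(2 * m : ℝ) + m * p) := by
    have : R ^ (-(2 * m : ℝ) + m * p) = (R⁻¹ * (R ^ (1 - p))⁻¹) ^ m := by
      rw [← Real.rpow_neg_one, ← Real.rpow_neg hR0.le, ← Real.rpow_add hR0, ← Real.rpow_natCast, ← Real.rpow_mul hR0.le]
      congr 1; ring
    rw [this, Real.div_rpow hc0.le hR0.le, hE0, mul_assoc (_ ^ (m + l + 1)), ← mul_pow]
    congr 2
    field_simp
  have e2 : ((2 * c) ^ (m + l + 1) * (2 * (c / R)) ^ m / 2) ^ 2 *
        (|LinearMap.det (shT m l)| * ((2 * c) ^ m * (2 * (c / R)) ^ (l + m))) = L0 * R ^ (-(3 * m + l : ℝ)) := by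
    have : R ^ (-(3 * m + l : ℝ)) = (R ^ m * R ^ m * R ^ (l + m))⁻¹ := by
      rw [Real.rpow_neg hR0.le, ← pow_add, ← pow_add, ← Real.rpow_natCast]
      congr 2; push_cast; ring
    rw [this, hL0, ← mul_div_assoc 2 c R, div_pow (2 * c) R m, div_pow (2 * c) R (l + m)]
    clear_value c
    field_simp
  rw [e1] at hμ5
  rw [e2] at hμ6
  refine lt_of_lt_of_le ?_ hμ6
  calc C * R ^ (-β) * (energy α μ).toReal ≤ C * R ^ (-β) * (E0 * R ^ (-(2 * m : ℝ) + m * p)) := by gcongr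
    _ = (C * E0 * R ^ (-δ)) * R ^ (-(3 * m + l : ℝ)) := by
      have : R ^ (-β) * R ^ (-(2 * m : ℝ) + m * p) = R ^ (-δ) * R ^ (-(3 * m + l : ℝ)) := by
        rw [← Real.rpow_add hR0, ← Real.rpow_add hR0]
        congr 1
        rw [hmp, hδ, hb]; ring
      calc _ = C * E0 * (R ^ (-β) * R ^ (-(2 * m : ℝ) + m * p)) := by ring
        _ = _ := by rw [this]; ring
    _ < _ := by gcongr

/-- if `d - m <= a < d` then `beta(a, H_m^{d-1}) = a - 1`: the decay estimate
holds for every `0 < b < a - 1` and fails for every `b > a - 1`. -/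
theorem statement7 (d m : ℕ) (hd : 3 ≤ d) (hm1 : 1 ≤ m) (hm2 : 2 * m ≤ d - 1)
    (α : ℝ) (hα1 : (d : ℝ) - m ≤ α) (hα2 : α < d) :
    (∀ β : ℝ, 0 < β → β < α - 1 → decayBound d m α β) ∧
    (∀ β : ℝ, α - 1 < β → decayFails d m α β) := by
  have hd0 : (m : ℝ) + 1 ≤ d := by exact_mod_cast (by omega : m + 1 ≤ d)
  constructor
  · intro β _ hβ
    obtain ⟨n, rfl⟩ : ∃ n, d = n + 1 := ⟨d - 1, by omega⟩
    exact part_one n m (by linarith) hβ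
  · intro β hβ
    obtain ⟨l, rfl⟩ : ∃ l, d = m + l + m + 1 := ⟨d - 1 - 2 * m, by omega⟩
    push_cast at hα1 hα2
    exact part_two m l hm1 (by linarith) (by linarith) hβ
end
end

section
/- Let n ≥ 2 be an integer and let M be an n×n real diagonal matrix all of whose diagonal entries are +1 or −1; let p_M be the number of +1 entries, n_M the number of −1 entries, and m = min(p_M, n_M). Let 0 < ε < 1, let w₁, …, w_l be an orthonormal family of vectors in ℝ^n, and let λ₁, …, λ_l be real numbers such that ⟨M w_i, w_j⟩ = λ_i δ_{ij} for all 1 ≤ i, j ≤ l. Then min( #{i : λ_i ≥ 1−ε}, #{i : λ_i ≤ −(1−ε)} ) + #{i : |λ_i| < 1−ε} ≤ m. -/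
open Finset

theorem count_aux (n : ℕ) (ε : Fin n → ℝ) (hε : ∀ k, ε k = 1 ∨ ε k = -1)
    (l : ℕ) (w : Fin l → Fin n → ℝ) (lam : Fin l → ℝ)
    (horth : ∀ i j, (∑ k, w i k * w j k) = if i = j then (1 : ℝ) else 0)
    (hM : ∀ i j, (∑ k, ε k * w i k * w j k) = if i = j then lam i else 0)
    (S : Finset (Fin l)) (hS : ∀ i ∈ S, -1 < lam i) :
    S.card ≤ (univ.filter fun k => ε k = 1).card := by
  classical
  have key : LinearIndependent ℝ
      (fun i : S => fun k : {k // ε k = 1} => w i.1 k.1) := by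
    rw [Fintype.linearIndependent_iff]
    intro g hg
    have hV : ∀ k, ε k = 1 → ∑ i : S, g i * w i.1 k = 0 := by
      intro k hk
      have := congrFun hg ⟨k, hk⟩
      simpa [Finset.sum_apply] using this
    have h0 : ∑ k, (1 + ε k) * ((∑ i : S, g i * w i.1 k) * (∑ j : S, g j * w j.1 k)) = 0 := by
      apply Finset.sum_eq_zero
      intro k _
      rcases hε k with h | h
      · rw [hV k h]; ring
      · rw [h]; ring
    have h1 : ∑ k, (1 + ε k) * ((∑ i : S, g i * w i.1 k) * (∑ j : S, g j * w j.1 k))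
        = ∑ i : S, g i ^ 2 * (1 + lam i.1) := by
      calc _ = ∑ k, ∑ i : S, ∑ j : S, g i * g j * (w i.1 k * w j.1 k + ε k * w i.1 k * w j.1 k) := by
            apply Finset.sum_congr rfl
            intro k _
            rw [Finset.sum_mul_sum, Finset.mul_sum]
            apply Finset.sum_congr rfl
            intro i _
            rw [Finset.mul_sum]
            apply Finset.sum_congr rfl
            intro j _
            ring
        _ = ∑ i : S, ∑ j : S, g i * g j * ∑ k, (w i.1 k * w j.1 k + ε k * w i.1 k * w j.1 k) := by
            rw [Finset.sum_comm]
            apply Finset.sum_congr rfl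
            intro i _
            rw [Finset.sum_comm]
            apply Finset.sum_congr rfl
            intro j _
            rw [Finset.mul_sum]
        _ = _ := by
            apply Finset.sum_congr rfl
            intro i _
            rw [Finset.sum_eq_single i]
            · rw [Finset.sum_add_distrib, horth, hM, if_pos rfl, if_pos rfl]; ring
            · intro j _ hj
              have hne : i.1 ≠ j.1 := fun h => hj (Subtype.ext h.symm)
              rw [Finset.sum_add_distrib, horth, hM, if_neg hne, if_neg hne]; ring
            · simp
    rw [h0] at h1
    have hnn : ∀ i ∈ (univ : Finset S), 0 ≤ g i ^ 2 * (1 + lam i.1) := fun i _ =>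
      mul_nonneg (sq_nonneg _) (by linarith [hS i.1 i.2])
    intro i
    have h2 := (Finset.sum_eq_zero_iff_of_nonneg hnn).1 h1.symm i (mem_univ i)
    rcases mul_eq_zero.1 h2 with h | h
    · exact pow_eq_zero_iff (two_ne_zero) |>.1 h
    · linarith [hS i.1 i.2]
  have := key.fintype_card_le_finrank
  simpa [Fintype.card_subtype] using this

/-- the eigenvalue-counting lemma. If `M` is a diagonal `±1` matrix on `ℝ^n`
(given by its diagonal `ε`), `w₁, …, w_l` is an orthonormal family and
`⟨M wᵢ, w_j⟩ = λᵢ δᵢⱼ`, then with `m = min(p_M, n_M)`,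
`min(#{i : λᵢ ≥ 1-ε}, #{i : λᵢ ≤ -(1-ε)}) + #{i : |λᵢ| < 1-ε} ≤ m`. -/
theorem statement10 (n : ℕ) (hn : 2 ≤ n) (ε : Fin n → ℝ) (hε : ∀ k, ε k = 1 ∨ ε k = -1)
    (e : ℝ) (he0 : 0 < e) (he1 : e < 1)
    (l : ℕ) (w : Fin l → Fin n → ℝ) (lam : Fin l → ℝ)
    (horth : ∀ i j, (∑ k, w i k * w j k) = if i = j then (1 : ℝ) else 0)
    (hM : ∀ i j, (∑ k, ε k * w i k * w j k) = if i = j then lam i else 0) :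
    min ((univ.filter fun i => 1 - e ≤ lam i).card)
        ((univ.filter fun i => lam i ≤ -(1 - e)).card)
      + (univ.filter fun i => |lam i| < 1 - e).card
      ≤ min ((univ.filter fun k => ε k = 1).card)
            ((univ.filter fun k => ε k = -1).card) := by
  have hc : ∀ (p q : Fin l → Prop) [DecidablePred p] [DecidablePred q], (∀ i, p i → ¬ q i) →
      (univ.filter p).card + (univ.filter q).card = (univ.filter p ∪ univ.filter q).card := by
    intro p q _ _ h
    rw [Finset.card_union_of_disjoint]
    rw [Finset.disjoint_filter]
    exact fun i _ => h i
  have hA : (univ.filter fun i => 1 - e ≤ lam i).card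
      + (univ.filter fun i => |lam i| < 1 - e).card ≤ (univ.filter fun k => ε k = 1).card := by
    rw [hc _ _ (fun i h h' => by linarith [(abs_lt.1 h').2])]
    apply count_aux n ε hε l w lam horth hM
    intro i hi
    simp only [mem_union, mem_filter, mem_univ, true_and, abs_lt] at hi
    rcases hi with h | h
    · linarith
    · linarith [h.1]
  have hB : (univ.filter fun i => lam i ≤ -(1 - e)).card
      + (univ.filter fun i => |lam i| < 1 - e).card ≤ (univ.filter fun k => ε k = -1).card := by
    rw [hc _ _ (fun i h h' => by linarith [(abs_lt.1 h').1])]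
    have := count_aux n (fun k => - ε k)
      (fun k => by rcases hε k with h | h <;> simp [h]) l w (fun i => - lam i) horth
      (fun i j => by
        have := hM i j
        simp only [neg_mul, Finset.sum_neg_distrib, this]
        split_ifs <;> simp)
      ((univ.filter fun i => lam i ≤ -(1 - e)) ∪ (univ.filter fun i => |lam i| < 1 - e))
      (by
        intro i hi
        simp only [mem_union, mem_filter, mem_univ, true_and, abs_lt] at hi
        rcases hi with h | h
        · linarith
        · linarith [h.2])
    simpa only [neg_eq_iff_eq_neg] using this
  omega
end
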